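/- arXiv:1409.6352 — 5 statements merged into one kernel-verified Lean document; each statement's English description precedes it below -/
import Mathlib

section
/- Let R_ε = {x ∈ [0,1] : there exist integers a and q ≥ 1 with gcd(a,q) = 1 such that (x − a/q)² + (ε − 1/(2q²))² ≤ 1/(4q⁴)} be the set of points of the horizontal segment [0,1] at height ε that lie inside some Ford disk. Then the Lebesgue measure of R_ε tends to 3/π as ε → 0⁺. -/
open MeasureTheory

/-- The set of points of the horizontal segment `[0,1]` at height `ε` lying inside some
Ford disk: the Ford disk over `a/q` (with `gcd(a,q) = 1`, `q ≥ 1`) is the closed disk with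
center `(a/q, 1/(2q²))` and radius `1/(2q²)`. -/
def fordSet (ε : ℝ) : Set ℝ :=
  {x | x ∈ Set.Icc (0 : ℝ) 1 ∧ ∃ a q : ℤ, 1 ≤ q ∧ Int.gcd a q = 1 ∧
    (x - (a : ℝ) / q) ^ 2 + (ε - 1 / (2 * (q : ℝ) ^ 2)) ^ 2 ≤ 1 / (4 * (q : ℝ) ^ 4)}


noncomputable def ff (x : ℝ) : ℝ := √(1 - x ^ 2)

lemma ff_nonneg (x : ℝ) : 0 ≤ ff x := Real.sqrt_nonneg _
lemma ff_le_one (x : ℝ) : ff x ≤ 1 := by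
  unfold ff; exact Real.sqrt_le_one.mpr (by nlinarith [sq_nonneg x])
lemma ff_zero_of {x : ℝ} (hx : 1 ≤ x) : ff x = 0 := by
  unfold ff; exact Real.sqrt_eq_zero_of_nonpos (by nlinarith)
lemma ff_anti : AntitoneOn ff (Set.Ici 0) := by
  intro x hx y hy hxy
  unfold ff
  apply Real.sqrt_le_sqrt
  have : (0:ℝ) ≤ x := hx
  nlinarith
lemma ff_cont : Continuous ff := by unfold ff; fun_prop

lemma ff_int : ∫ x in (0:ℝ)..1, ff x = Real.pi / 4 := by
  have h := integral_sqrt_one_sub_sq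
  have h1 : ∫ x in (-1:ℝ)..0, ff x = ∫ x in (0:ℝ)..1, ff x := by
    have := intervalIntegral.integral_comp_neg (a := 0) (b := 1) ff
    simp only [neg_zero] at this
    rw [← this]
    simp [ff]
  have h2 := intervalIntegral.integral_add_adjacent_intervals (μ := volume)
    (ff_cont.intervalIntegrable (-1) 0) (ff_cont.intervalIntegrable 0 1)
  have h3 : ∫ x in (-1:ℝ)..1, ff x = Real.pi / 2 := h
  linarith

lemma ff_int' {b : ℝ} (hb : 1 ≤ b) : ∫ x in (0:ℝ)..b, ff x = Real.pi / 4 := by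
  rw [← intervalIntegral.integral_add_adjacent_intervals
    (ff_cont.intervalIntegrable 0 1) (ff_cont.intervalIntegrable 1 b), ff_int]
  have : ∫ x in (1:ℝ)..b, ff x = ∫ x in (1:ℝ)..b, 0 := by
    apply intervalIntegral.integral_congr
    intro x hx
    rw [Set.uIcc_of_le hb] at hx
    exact ff_zero_of hx.1
  rw [this]; simp

lemma riem {h : ℝ} (hh : 0 < h) {M : ℕ} (hM : 1 ≤ h * M) :
    h * ∑ m ∈ Finset.Icc 1 M, ff (h * m) ≤ Real.pi / 4 ∧
    Real.pi / 4 - h ≤ h * ∑ m ∈ Finset.Icc 1 M, ff (h * m) := by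
  have anti : AntitoneOn (fun x => ff (h * x)) (Set.Icc (0:ℝ) (0 + M)) := by
    intro x hx y hy hxy
    exact ff_anti (mul_nonneg hh.le hx.1) (mul_nonneg hh.le hy.1)
      (mul_le_mul_of_nonneg_left hxy hh.le)
  have e : h * ∫ x in (0:ℝ)..(0+M), ff (h * x) = Real.pi / 4 := by
    rw [intervalIntegral.integral_comp_mul_left _ hh.ne']
    simp only [mul_zero, zero_add, smul_eq_mul]
    rw [ff_int' hM]; field_simp
  have e2 : ∑ m ∈ Finset.Icc 1 M, ff (h * m) = ∑ i ∈ Finset.range M, ff (h * (0 + ((i + 1 : ℕ):ℝ))) := by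
    have : Finset.Icc 1 M = Finset.Ico 1 (M+1) := by ext; simp
    rw [this, Finset.sum_Ico_eq_sum_range]
    simp [add_comm]
  have u := anti.sum_le_integral
  have l := anti.integral_le_sum
  have e3 : ∑ i ∈ Finset.range M, ff (h * (0 + (i:ℝ))) ≤ 1 + ∑ i ∈ Finset.range M, ff (h * (0 + ((i + 1 : ℕ):ℝ))) := by
    have a := Finset.sum_range_succ (fun i : ℕ => ff (h * (0 + (i:ℝ)))) M
    have b := Finset.sum_range_succ' (fun i : ℕ => ff (h * (0 + (i:ℝ)))) M
    have c := ff_nonneg (h * (0 + (M:ℝ)))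
    have d := ff_le_one (h * (0 + ((0:ℕ):ℝ)))
    linarith
  rw [e2]
  constructor
  · rw [← e]; exact mul_le_mul_of_nonneg_left u hh.le
  · rw [← e]
    have := mul_le_mul_of_nonneg_left (l.trans e3) hh.le
    linarith

lemma tot_div (q : ℕ) (hq : 0 < q) : (Nat.totient q : ℝ) / q =
    ∑ x ∈ q.divisorsAntidiagonal, (ArithmeticFunction.moebius x.1 : ℝ) / x.1 := by
  have := (ArithmeticFunction.sum_eq_iff_sum_mul_moebius_eq (R := ℝ)
    (f := fun n => (Nat.totient n : ℝ)) (g := fun n => (n:ℝ))).1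
    (fun n _ => by exact_mod_cast Nat.sum_totient n) q hq
  rw [← this, Finset.sum_div]
  apply Finset.sum_congr rfl
  rintro ⟨d, m⟩ hx
  rw [Nat.mem_divisorsAntidiagonal] at hx
  have hd : (d:ℝ) ≠ 0 := by
    rintro h; simp at h; simp [h] at hx; omega
  have hm : (m:ℝ) ≠ 0 := by
    rintro h; simp at h; simp [h] at hx; omega
  have : (q:ℝ) = d * m := by exact_mod_cast hx.1.symm
  simp only [this]
  field_simp

lemma swap {h : ℝ} (hh : 0 < h) {K : ℕ} (hK : 1 ≤ h * K) :
    ∑ q ∈ Finset.Icc 1 K, (Nat.totient q : ℝ) / q * ff (h * q) =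
    ∑ d ∈ Finset.Icc 1 K, ∑ m ∈ Finset.Icc 1 K,
      (ArithmeticFunction.moebius d : ℝ) / d * ff (h * d * m) := by
  have : ∀ q ∈ Finset.Icc 1 K, (Nat.totient q : ℝ) / q * ff (h * q) =
      ∑ x ∈ q.divisorsAntidiagonal, (ArithmeticFunction.moebius x.1 : ℝ) / x.1 * ff (h * x.1 * x.2) := by
    intro q hq
    rw [tot_div q (by simp at hq; omega), Finset.sum_mul]
    apply Finset.sum_congr rfl
    intro x hx
    rw [Nat.mem_divisorsAntidiagonal] at hx
    rw [← hx.1]; push_cast; ring_nf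
  rw [Finset.sum_congr rfl this, Finset.sum_sigma', ← Finset.sum_product']
  apply Finset.sum_bij_ne_zero (fun a _ _ => a.2)
  · rintro ⟨q, d, m⟩ h1 _
    simp only [Finset.mem_sigma, Finset.mem_Icc, Nat.mem_divisorsAntidiagonal] at h1
    obtain ⟨⟨h1, h2⟩, h3, h4⟩ := h1
    simp only [Finset.mem_product, Finset.mem_Icc]
    have hd : 0 < d := Nat.pos_of_ne_zero (by rintro rfl; simp at h3; omega)
    have hm : 0 < m := Nat.pos_of_ne_zero (by rintro rfl; simp at h3; omega)
    refine ⟨⟨hd, ?_⟩, hm, ?_⟩ <;> nlinarith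
  · rintro ⟨q, d, m⟩ h1 _ ⟨q', d', m'⟩ h2 _ h3
    simp only [Finset.mem_sigma, Nat.mem_divisorsAntidiagonal] at h1 h2
    simp only [Prod.mk.injEq] at h3
    obtain ⟨rfl, rfl⟩ := h3
    obtain rfl : q = q' := by rw [← h1.2.1, ← h2.2.1]
    rfl
  · rintro ⟨d, m⟩ h1 h2
    simp only [Finset.mem_product, Finset.mem_Icc] at h1
    have hd : 0 < d * m := Nat.mul_pos (by omega) (by omega)
    have hdm : d * m ≤ K := by
      by_contra hc
      push Not at hc
      apply h2
      rw [ff_zero_of, mul_zero]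
      have : (K:ℝ) ≤ d * m := by exact_mod_cast hc.le
      simp only
      nlinarith
    refine ⟨⟨d * m, d, m⟩, ?_, h2, rfl⟩
    simp only [Finset.mem_sigma, Finset.mem_Icc, Nat.mem_divisorsAntidiagonal]
    exact ⟨⟨hd, hdm⟩, by trivial, by omega⟩
  · rintro ⟨q, d, m⟩ _ _
    rfl

lemma moeb_sum : ∑' d : ℕ, (ArithmeticFunction.moebius d : ℝ) / (d:ℝ)^2 = 6 / Real.pi ^ 2 := by
  have h2 : 1 < (2:ℂ).re := by norm_num
  have h := ArithmeticFunction.LSeries_zeta_mul_Lseries_moebius h2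
  rw [ArithmeticFunction.LSeries_zeta_eq_riemannZeta h2, riemannZeta_two] at h
  have e : LSeries (fun n => ((ArithmeticFunction.moebius n : ℤ) : ℂ)) 2 =
      ((∑' d : ℕ, (ArithmeticFunction.moebius d : ℝ) / (d:ℝ)^2 : ℝ) : ℂ) := by
    rw [LSeries, Complex.ofReal_tsum]
    apply tsum_congr
    intro n
    rw [LSeries.term_of_ne_zero' (by norm_num)]
    push_cast
    norm_cast
  rw [e] at h
  have h' : (Real.pi ^ 2 / 6) * (∑' d : ℕ, (ArithmeticFunction.moebius d : ℝ) / (d:ℝ)^2) = 1 := by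
    exact_mod_cast h
  have := Real.pi_ne_zero
  field_simp at h' ⊢
  linarith

noncomputable def KK (h : ℝ) : ℕ := ⌈1 / h⌉₊
lemma KK_spec {h : ℝ} (hh : 0 < h) : 1 ≤ h * KK h := by
  have := Nat.le_ceil (1 / h)
  rw [div_le_iff₀ hh] at this
  unfold KK; linarith

noncomputable def SS (h : ℝ) : ℝ :=
  ∑ q ∈ Finset.Icc 1 (KK h), (Nat.totient q : ℝ) * (2 * (h / q * ff (h * q)))

lemma SS_eq {h : ℝ} (hh : 0 < h) : SS h = 2 * ∑' d : ℕ, (ArithmeticFunction.moebius d : ℝ) / (d:ℝ)^2 *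
    (h * d * ∑ m ∈ Finset.Icc 1 (KK h), ff (h * d * m)) := by
  have hK := KK_spec hh
  have : SS h = 2 * (h * ∑ q ∈ Finset.Icc 1 (KK h), (Nat.totient q : ℝ) / q * ff (h * q)) := by
    unfold SS
    rw [Finset.mul_sum, Finset.mul_sum]
    apply Finset.sum_congr rfl
    intros; ring
  rw [this, swap hh hK, tsum_eq_sum (s := Finset.Icc 1 (KK h))]
  · congr 1
    rw [Finset.mul_sum]
    apply Finset.sum_congr rfl
    intro d hd
    have hd : (d:ℝ) ≠ 0 := by
      simp at hd; norm_cast; omega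
    rw [← Finset.mul_sum]
    field_simp
  · intro d hd
    rcases Nat.eq_zero_or_pos d with rfl | h0
    · simp
    have hd : KK h ≤ d := by simp at hd; omega
    have hd' : (KK h : ℝ) ≤ d := by exact_mod_cast hd
    rw [Finset.sum_eq_zero, mul_zero, mul_zero]
    intro m hm
    have hm : (1:ℝ) ≤ m := by simp at hm; exact_mod_cast hm.1
    apply ff_zero_of
    have : 1 ≤ h * d := by nlinarith
    nlinarith

lemma SS_tendsto : Filter.Tendsto SS (nhdsWithin 0 (Set.Ioi 0)) (nhds (3 / Real.pi)) := by
  have hpos : ∀ᶠ h : ℝ in nhdsWithin 0 (Set.Ioi 0), 0 < h := self_mem_nhdsWithin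
  have hb : ∀ (d : ℕ) (h : ℝ), 0 < h → 0 < d →
      h * d * ∑ m ∈ Finset.Icc 1 (KK h), ff (h * d * m) ≤ Real.pi / 4 ∧
      Real.pi / 4 - h * d ≤ h * d * ∑ m ∈ Finset.Icc 1 (KK h), ff (h * d * m) := by
    intro d h hh hd
    have hd' : (1:ℝ) ≤ d := by exact_mod_cast hd
    apply riem (by positivity)
    have := KK_spec hh
    nlinarith
  have key : Filter.Tendsto (fun h : ℝ => ∑' d : ℕ, (ArithmeticFunction.moebius d : ℝ) / (d:ℝ)^2 *
    (h * d * ∑ m ∈ Finset.Icc 1 (KK h), ff (h * d * m))) (nhdsWithin 0 (Set.Ioi 0))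
      (nhds (∑' d : ℕ, (ArithmeticFunction.moebius d : ℝ) / (d:ℝ)^2 * (Real.pi / 4))) := by
    apply tendsto_tsum_of_dominated_convergence (bound := fun d : ℕ => 1 / (d:ℝ)^2 * (Real.pi / 4))
    · exact (Real.summable_one_div_nat_pow.2 (by norm_num)).mul_right _
    · intro d
      rcases Nat.eq_zero_or_pos d with rfl | h0
      · simp
      apply Filter.Tendsto.const_mul
      apply tendsto_of_tendsto_of_tendsto_of_le_of_le' (g := fun h : ℝ => Real.pi / 4 - h * d)
        (h := fun _ => Real.pi / 4) _ tendsto_const_nhds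
      · filter_upwards [hpos] with h hh using (hb d h hh h0).2
      · filter_upwards [hpos] with h hh using (hb d h hh h0).1
      · apply tendsto_nhdsWithin_of_tendsto_nhds
        have : Continuous (fun h : ℝ => Real.pi / 4 - h * d) := by fun_prop
        simpa using this.tendsto 0
    · filter_upwards [hpos] with h hh d
      rcases Nat.eq_zero_or_pos d with rfl | h0
      · simp
      rw [norm_mul, norm_div]
      have m1 : ‖(ArithmeticFunction.moebius d : ℝ)‖ ≤ 1 := by
        rw [Real.norm_eq_abs]
        exact_mod_cast ArithmeticFunction.abs_moebius_le_one
      have m2 : ‖h * d * ∑ m ∈ Finset.Icc 1 (KK h), ff (h * d * m)‖ ≤ Real.pi / 4 := by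
        rw [Real.norm_of_nonneg]
        · exact (hb d h hh h0).1
        · exact mul_nonneg (by positivity) (Finset.sum_nonneg fun _ _ => ff_nonneg _)
      have m3 : ‖(d:ℝ)^2‖ = (d:ℝ)^2 := by rw [Real.norm_of_nonneg]; positivity
      rw [m3]
      gcongr
  rw [tsum_mul_right, moeb_sum] at key
  have key2 := key.const_mul 2
  have e : 2 * (6 / Real.pi ^ 2 * (Real.pi / 4)) = 3 / Real.pi := by
    have := Real.pi_ne_zero
    field_simp; norm_num
  rw [e] at key2
  apply key2.congr'
  filter_upwards [hpos] with h hh using (SS_eq hh).symm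

noncomputable def rr (h : ℝ) (q : ℕ) : ℝ := h / q * ff (h * q)

lemma rr_nonneg {h : ℝ} (hh : 0 < h) (q : ℕ) : 0 ≤ rr h q :=
  mul_nonneg (by positivity) (ff_nonneg _)

lemma rr_sq {h : ℝ} {q : ℕ} (hq : 0 < q) (hhq : (h * q) ^ 2 ≤ 1) :
    rr h q ^ 2 = h ^ 2 / (q:ℝ) ^ 2 - h ^ 4 := by
  have : (q:ℝ) ≠ 0 := by positivity
  unfold rr ff
  rw [mul_pow, Real.sq_sqrt (by linarith)]
  field_simp

lemma rr_le {h : ℝ} (hh : 0 < h) {q : ℕ} (hq : 0 < q) : rr h q ≤ 1 / (2 * q) := by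
  have hq' : (1:ℝ) ≤ q := by exact_mod_cast hq
  by_cases hhq : 1 ≤ h * q
  · unfold rr; rw [ff_zero_of hhq]; simp
  · push Not at hhq
    have h0 : 0 < h * q := by positivity
    have h1 := rr_sq hq (by nlinarith : (h * q) ^ 2 ≤ 1)
    apply le_of_sq_le_sq _ (by positivity)
    rw [h1]
    have e : (1 / (2 * (q:ℝ))) ^ 2 = 1 / (4 * (q:ℝ)^2) := by ring
    rw [e]
    have : h ^ 2 / (q:ℝ) ^ 2 - h ^ 4 ≤ 1 / (4 * (q:ℝ)^4) := by
      rw [le_div_iff₀ (by positivity)]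
      have : (h ^ 2 / (q:ℝ) ^ 2 - h ^ 4) * (4 * (q:ℝ)^4) = 1 - (1 - 2 * h^2 * q^2)^2 := by
        field_simp; ring
      rw [this]; nlinarith [sq_nonneg (1 - 2 * h^2 * q^2)]
    apply this.trans
    gcongr 1 / (4 * ?_)
    nlinarith [sq_nonneg ((q:ℝ)), mul_self_nonneg ((q:ℝ)^2), one_le_pow₀ (n := 2) hq']

lemma rr_add_le {h : ℝ} (hh : 0 < h) {q p : ℕ} (hq : 0 < q) (hp : 0 < p)
    (hhq : (h * q) ^ 2 ≤ 1) (hhp : (h * p) ^ 2 ≤ 1) :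
    rr h q + rr h p ≤ 1 / (q * p) := by
  have hq' : (0:ℝ) < q := by exact_mod_cast hq
  have hp' : (0:ℝ) < p := by exact_mod_cast hp
  unfold rr ff
  set s := √(1 - (h * q) ^ 2) with hs
  set t := √(1 - (h * p) ^ 2) with ht
  have hs2 : s ^ 2 = 1 - (h * q)^2 := Real.sq_sqrt (by linarith)
  have ht2 : t ^ 2 = 1 - (h * p)^2 := Real.sq_sqrt (by linarith)
  rw [le_div_iff₀ (by positivity)]
  have e : (h / q * s + h / p * t) * (q * p) = (h * p) * s + (h * q) * t := by
    field_simp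
  rw [e]
  nlinarith [sq_nonneg (h * p - s), sq_nonneg (h * q - t)]

lemma disk_iff (ε x c Q : ℝ) (hQ : 0 < Q) :
    (x - c) ^ 2 + (ε - 1 / (2 * Q ^ 2)) ^ 2 ≤ 1 / (4 * Q ^ 4) ↔
    (x - c) ^ 2 ≤ ε / Q ^ 2 - ε ^ 2 := by
  have : (ε - 1 / (2 * Q ^ 2)) ^ 2 = ε ^ 2 - ε / Q ^ 2 + 1 / (4 * Q ^ 4) := by
    field_simp; ring
  rw [this]
  constructor <;> intro h <;> linarith

noncomputable def II (K : ℕ) : Finset (Σ _ : ℕ, ℕ) :=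
  (Finset.Icc 1 K).sigma (fun q => (Finset.Ico 1 (1 + q)).filter (fun a => q.Coprime a))

lemma mem_II {K q a : ℕ} : (⟨q, a⟩ : Σ _ : ℕ, ℕ) ∈ II K ↔
    (1 ≤ q ∧ q ≤ K) ∧ (1 ≤ a ∧ a ≤ q) ∧ q.Coprime a := by
  simp [II]; omega

lemma sum_II {h : ℝ} : ∑ p ∈ II (KK h), 2 * rr h p.1 = SS h := by
  unfold II SS
  rw [Finset.sum_sigma]
  apply Finset.sum_congr rfl
  intro q _
  simp only [Finset.sum_const, Nat.filter_coprime_Ico_eq_totient, nsmul_eq_mul]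
  rfl

lemma sum_II' {h : ℝ} (hh : 0 < h) :
    ∑ p ∈ II (KK h), ENNReal.ofReal (2 * rr h p.1) = ENNReal.ofReal (SS h) := by
  rw [← sum_II, ENNReal.ofReal_sum_of_nonneg]
  intro p _
  have := rr_nonneg hh p.1
  positivity

lemma upper {h : ℝ} (hh : 0 < h) : fordSet (h ^ 2) ⊆
    (⋃ p ∈ II (KK h), Set.Icc ((p.2 : ℝ) / p.1 - rr h p.1) ((p.2 : ℝ) / p.1 + rr h p.1)) ∪
      Set.Icc (- rr h 1) (rr h 1) := by
  rintro x ⟨⟨hx0, hx1⟩, a, q, hq, hg, hd⟩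
  lift q to ℕ using by omega
  have hq0 : 0 < q := by omega
  have hq' : (1:ℝ) ≤ q := by exact_mod_cast hq0
  have hqp : (0:ℝ) < q := by linarith
  rw [Int.cast_natCast, disk_iff _ _ _ _ hqp] at hd
  have hhq : (h * q) ^ 2 ≤ 1 := by
    have h0 : 0 ≤ h ^ 2 / (q:ℝ) ^ 2 - (h ^ 2) ^ 2 := (sq_nonneg _).trans hd
    have e : h ^ 2 / (q:ℝ) ^ 2 - (h ^ 2) ^ 2 = h ^ 2 / (q:ℝ) ^ 2 * (1 - (h * q) ^ 2) := by
      field_simp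
    rw [e] at h0
    have := nonneg_of_mul_nonneg_right h0 (by positivity)
    linarith
  have hhq1 : h * q ≤ 1 := by nlinarith [mul_pos hh hqp]
  have hqK : q ≤ KK h := by
    have := KK_spec hh
    have : (q:ℝ) ≤ KK h := le_of_mul_le_mul_left (hhq1.trans this) hh
    exact_mod_cast this
  have hr2 := rr_sq hq0 hhq
  have hr0 := rr_nonneg hh q
  have hr1 := rr_le hh hq0
  have habs : |x - a / q| ≤ rr h q := by
    apply abs_le_of_sq_le_sq _ hr0
    rw [hr2]
    linarith [hd, (by ring : (h^2)^2 = h^4)]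
  obtain ⟨h1, h2⟩ := abs_le.1 habs
  have hr3 : rr h q * q ≤ 1 / 2 := by
    rw [le_div_iff₀ (by positivity)] at hr1; linarith
  have e : (a:ℝ) = (a / q) * q := by field_simp
  have ha0 : 0 ≤ a := by
    have : (-1:ℝ) < a := by rw [e]; nlinarith
    have : (-1:ℤ) < a := by exact_mod_cast this
    omega
  have haq : a ≤ q := by
    have : (a:ℝ) < q + 1 := by rw [e]; nlinarith
    have : a < q + 1 := by exact_mod_cast this
    omega
  lift a to ℕ using ha0
  rw [Int.gcd_natCast_natCast] at hg
  simp only [Int.cast_natCast] at h1 h2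
  rcases Nat.eq_zero_or_pos a with rfl | hpos
  · right
    simp at hg
    subst hg
    simp at h1 h2
    exact ⟨by linarith, by linarith⟩
  · left
    simp only [Set.mem_iUnion]
    refine ⟨⟨q, a⟩, mem_II.2 ⟨⟨hq0, hqK⟩, ⟨hpos, by omega⟩, ?_⟩, ?_, ?_⟩
    · rw [Nat.Coprime, Nat.gcd_comm]; exact hg
    · simp only; linarith
    · simp only; linarith

lemma ioo_facts {h : ℝ} (hh : 0 < h) {q a : ℕ} {x : ℝ} (hq0 : 0 < q)
    (hx : x ∈ Set.Ioo ((a : ℝ) / q - rr h q) ((a : ℝ) / q + rr h q)) :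
    (h * q) ^ 2 ≤ 1 ∧ |x - a / q| < rr h q := by
  have habs : |x - a / q| < rr h q := abs_lt.2 ⟨by linarith [hx.1], by linarith [hx.2]⟩
  refine ⟨?_, habs⟩
  have : 0 < rr h q := (abs_nonneg _).trans_lt habs
  by_contra hc
  push Not at hc
  have h0 : ff (h * q) = 0 := by
    unfold ff; exact Real.sqrt_eq_zero_of_nonpos (by linarith)
  unfold rr at this
  simp [h0] at this

lemma lower {h : ℝ} (hh : 0 < h) :
    (⋃ p ∈ II (KK h), Set.Ioo ((p.2 : ℝ) / p.1 - rr h p.1) ((p.2 : ℝ) / p.1 + rr h p.1)) ⊆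
    fordSet (h ^ 2) ∪ Set.Icc 1 (1 + rr h 1) := by
  intro x hx
  simp only [Set.mem_iUnion] at hx
  obtain ⟨⟨q, a⟩, hI, hx⟩ := hx
  obtain ⟨⟨hq0, hqK⟩, ⟨ha, haq⟩, hc⟩ := mem_II.1 hI
  simp only at hx
  have hq' : (1:ℝ) ≤ q := by exact_mod_cast hq0
  have hqp : (0:ℝ) < q := by linarith
  obtain ⟨hhq, habs⟩ := ioo_facts hh hq0 hx
  have hr2 := rr_sq hq0 hhq
  have hr0 := rr_nonneg hh q
  have hr1 := rr_le hh hq0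
  have hr3 : rr h q ≤ 1 / q := by
    apply hr1.trans
    gcongr; linarith
  have ha' : (1:ℝ) ≤ a := by exact_mod_cast ha
  have hx0 : 0 ≤ x := by
    have : 1 / (q:ℝ) ≤ a / q := by gcongr
    linarith [hx.1]
  by_cases hx1 : x ≤ 1
  · left
    refine ⟨⟨hx0, hx1⟩, a, q, by exact_mod_cast hq0, ?_, ?_⟩
    · rw [Int.gcd_natCast_natCast, Nat.gcd_comm]; exact hc
    · simp only [Int.cast_natCast]
      rw [disk_iff _ _ _ _ hqp]
      have : (x - a / q) ^ 2 ≤ rr h q ^ 2 := sq_le_sq' (abs_lt.1 habs).1.le (abs_lt.1 habs).2.le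
      rw [hr2] at this
      linarith [(by ring : (h^2)^2 = h^4)]
  · right
    push Not at hx1
    have : a = q := by
      by_contra hne
      have : (a:ℝ) + 1 ≤ q := by exact_mod_cast (by omega : a + 1 ≤ q)
      have : (a:ℝ) / q + 1 / q ≤ 1 := by
        rw [← add_div, div_le_one hqp]; exact this
      linarith [hx.2]
    subst this
    simp at hc
    subst hc
    simp at hx
    exact ⟨hx1.le, hx.2.le⟩

lemma disj {h : ℝ} (hh : 0 < h) :
    Set.PairwiseDisjoint (↑(II (KK h)) : Set (Σ _ : ℕ, ℕ)) (fun p : Σ _ : ℕ, ℕ =>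
      Set.Ioo ((p.2 : ℝ) / p.1 - rr h p.1) ((p.2 : ℝ) / p.1 + rr h p.1)) := by
  rintro ⟨q, a⟩ h1 ⟨p, b⟩ h2 hne
  rw [Finset.mem_coe, mem_II] at h1 h2
  rw [Function.onFun, Set.disjoint_left]
  intro x hx hy
  obtain ⟨⟨hq0, -⟩, -, hc⟩ := h1
  obtain ⟨⟨hp0, -⟩, -, hc'⟩ := h2
  simp only at hx hy
  obtain ⟨hhq, hxq⟩ := ioo_facts hh hq0 hx
  obtain ⟨hhp, hxp⟩ := ioo_facts hh hp0 hy
  have hqp : (0:ℝ) < q := by exact_mod_cast hq0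
  have hpp : (0:ℝ) < p := by exact_mod_cast hp0
  have hs := rr_add_le hh hq0 hp0 hhq hhp
  have ht : |(a:ℝ) / q - b / p| < 1 / (q * p) := by
    have : |(a:ℝ) / q - b / p| ≤ |x - a / q| + |x - b / p| := by
      rw [abs_sub_comm x (a / q)]
      have := abs_add_le ((a:ℝ) / q - x) (x - b / p)
      simpa using this
    linarith
  have e : (a:ℝ) / q - b / p = (a * p - b * q) / (q * p) := by
    field_simp
  rw [e, abs_div, abs_of_pos (mul_pos hqp hpp), div_lt_div_iff_of_pos_right (mul_pos hqp hpp)] at ht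
  have hz : |(a * p - b * q : ℤ)| < 1 := by exact_mod_cast ht
  rw [Int.abs_lt_one_iff] at hz
  have hz' : a * p = b * q := by
    have : (a * p : ℤ) = b * q := by linarith
    exact_mod_cast this
  apply hne
  have hqp' : q ∣ p := hc.dvd_of_dvd_mul_left (Dvd.intro_left b hz'.symm)
  have hpq' : p ∣ q := hc'.dvd_of_dvd_mul_left (Dvd.intro_left a hz')
  obtain rfl := Nat.dvd_antisymm hqp' hpq'
  have := Nat.eq_of_mul_eq_mul_right hq0 hz'
  rw [this]

lemma rr_one_le {h : ℝ} (hh : 0 < h) : rr h 1 ≤ h := by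
  unfold rr
  have := ff_le_one (h * (1:ℕ))
  simp at this ⊢
  nlinarith

lemma SS_nonneg {h : ℝ} (hh : 0 < h) : 0 ≤ SS h := by
  rw [← sum_II]
  exact Finset.sum_nonneg fun p _ => by have := rr_nonneg hh p.1; positivity

lemma vol_upper {h : ℝ} (hh : 0 < h) : (volume (fordSet (h ^ 2))).toReal ≤ SS h + 2 * h := by
  have h0 := rr_nonneg hh 1
  have h1 := rr_one_le hh
  have h2 := SS_nonneg hh
  apply ENNReal.toReal_le_of_le_ofReal (by linarith)
  calc volume (fordSet (h ^ 2)) ≤ _ := measure_mono (upper hh)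
    _ ≤ _ := measure_union_le _ _
    _ ≤ (∑ p ∈ II (KK h), volume (Set.Icc ((p.2 : ℝ) / p.1 - rr h p.1) ((p.2 : ℝ) / p.1 + rr h p.1)))
        + volume (Set.Icc (- rr h 1) (rr h 1)) := by
          gcongr; exact measure_biUnion_finset_le _ _
    _ = ENNReal.ofReal (SS h) + ENNReal.ofReal (2 * rr h 1) := by
          rw [← sum_II' hh]
          congr 1
          · apply Finset.sum_congr rfl
            intro p _
            rw [Real.volume_Icc]; congr 1; ring
          · rw [Real.volume_Icc]; congr 1; ring
    _ ≤ ENNReal.ofReal (SS h + 2 * h) := by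
          rw [← ENNReal.ofReal_add h2 (by linarith)]
          apply ENNReal.ofReal_le_ofReal; linarith

lemma vol_lower {h : ℝ} (hh : 0 < h) : SS h - h ≤ (volume (fordSet (h ^ 2))).toReal := by
  have h0 := rr_nonneg hh 1
  have h1 := rr_one_le hh
  have hfin : volume (fordSet (h ^ 2)) ≠ ⊤ := by
    have : volume (fordSet (h ^ 2)) ≤ volume (Set.Icc (0:ℝ) 1) := measure_mono fun x hx => hx.1
    exact ne_top_of_le_ne_top (by simp) this
  have key : ENNReal.ofReal (SS h) ≤ volume (fordSet (h ^ 2)) + ENNReal.ofReal (rr h 1) := by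
    calc ENNReal.ofReal (SS h) = ∑ p ∈ II (KK h), volume (Set.Ioo ((p.2 : ℝ) / p.1 - rr h p.1) ((p.2 : ℝ) / p.1 + rr h p.1)) := by
          rw [← sum_II' hh]
          apply Finset.sum_congr rfl
          intro p _
          rw [Real.volume_Ioo]; congr 1; ring
      _ = volume (⋃ p ∈ II (KK h), Set.Ioo ((p.2 : ℝ) / p.1 - rr h p.1) ((p.2 : ℝ) / p.1 + rr h p.1)) :=
          (measure_biUnion_finset (disj hh) fun _ _ => measurableSet_Ioo).symm
      _ ≤ _ := measure_mono (lower hh)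
      _ ≤ _ := measure_union_le _ _
      _ = _ := by rw [Real.volume_Icc]; congr 2; ring
  rw [← ENNReal.ofReal_toReal hfin, ← ENNReal.ofReal_add ENNReal.toReal_nonneg h0,
    ENNReal.ofReal_le_ofReal_iff (add_nonneg ENNReal.toReal_nonneg h0)] at key
  linarith

theorem fordSet_volume_tendsto :
    Filter.Tendsto (fun ε : ℝ => (volume (fordSet ε)).toReal)
      (nhdsWithin 0 (Set.Ioi 0)) (nhds (3 / Real.pi)) := by
  have hpos : ∀ᶠ h : ℝ in nhdsWithin 0 (Set.Ioi 0), 0 < h := self_mem_nhdsWithin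
  have hid : Filter.Tendsto (fun h : ℝ => h) (nhdsWithin 0 (Set.Ioi 0)) (nhds 0) :=
    tendsto_nhdsWithin_of_tendsto_nhds Filter.tendsto_id
  have key : Filter.Tendsto (fun h : ℝ => (volume (fordSet (h ^ 2))).toReal)
      (nhdsWithin 0 (Set.Ioi 0)) (nhds (3 / Real.pi)) := by
    apply tendsto_of_tendsto_of_tendsto_of_le_of_le' (g := fun h => SS h - h)
      (h := fun h => SS h + 2 * h)
    · simpa using SS_tendsto.sub hid
    · simpa using SS_tendsto.add (hid.const_mul 2)
    · filter_upwards [hpos] with h hh using vol_lower hh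
    · filter_upwards [hpos] with h hh using vol_upper hh
  have hs : Filter.Tendsto Real.sqrt (nhdsWithin 0 (Set.Ioi 0)) (nhdsWithin 0 (Set.Ioi 0)) := by
    apply tendsto_nhdsWithin_iff.2
    constructor
    · apply tendsto_nhdsWithin_of_tendsto_nhds
      simpa using Real.continuous_sqrt.tendsto 0
    · filter_upwards [hpos] with h hh using Real.sqrt_pos.2 hh
  apply (key.comp hs).congr'
  filter_upwards [hpos] with h hh
  simp [Real.sq_sqrt hh.le]
end

section
/- There exists an absolute constant C > 0 such that for all 0 < ε ≤ 1/2 one has |L(ε) − 3/π| ≤ C·√ε·|log ε|. -/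
/-- `L ε = 2√ε · Σ_{q ≥ 1, q² ≤ 1/ε} φ(q)·√(1/q² − ε)`, the total length of the part of the
segment `{(x, ε) : 0 ≤ x ≤ 1}` lying inside Ford disks. -/
noncomputable def L (ε : ℝ) : ℝ :=
  2 * Real.sqrt ε *
    ∑' q : ℕ, if 1 ≤ q ∧ (q : ℝ) ^ 2 ≤ 1 / ε then
      (Nat.totient q : ℝ) * Real.sqrt (1 / (q : ℝ) ^ 2 - ε) else 0

section FordAux
open ArithmeticFunction Finset

lemma double_sum (N : ℕ) (F : ℕ → ℕ → ℝ) :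
    ∑ q ∈ Finset.Ioc 0 N, ∑ x ∈ q.divisorsAntidiagonal, F x.1 x.2
      = ∑ d ∈ Finset.Ioc 0 N, ∑ m ∈ Finset.Ioc 0 (N / d), F d m := by
  rw [Finset.sum_sigma', Finset.sum_sigma']
  refine Finset.sum_nbij' (fun x => ⟨x.2.1, x.2.2⟩) (fun y => ⟨y.1 * y.2, (y.1, y.2)⟩) ?_ ?_ ?_ ?_ ?_
  · rintro ⟨q, d, m⟩ h
    simp only [Finset.mem_sigma, Finset.mem_Ioc, Nat.mem_divisorsAntidiagonal] at h ⊢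
    obtain ⟨⟨h1, h2⟩, h3, h4⟩ := h
    have hd : 0 < d := Nat.pos_of_ne_zero (by rintro rfl; simp at h3; omega)
    have hm : 0 < m := Nat.pos_of_ne_zero (by rintro rfl; simp at h3; omega)
    refine ⟨⟨hd, by nlinarith⟩, hm, ?_⟩
    rw [Nat.le_div_iff_mul_le hd]; nlinarith
  · rintro ⟨d, m⟩ h
    simp only [Finset.mem_sigma, Finset.mem_Ioc, Nat.mem_divisorsAntidiagonal] at h ⊢
    obtain ⟨⟨h1, h2⟩, h3, h4⟩ := h
    rw [Nat.le_div_iff_mul_le h1] at h4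
    have := Nat.mul_pos h1 h3
    exact ⟨⟨this, by nlinarith⟩, trivial, by omega⟩
  · rintro ⟨q, d, m⟩ h
    simp only [Finset.mem_sigma, Finset.mem_Ioc, Nat.mem_divisorsAntidiagonal] at h ⊢
    obtain ⟨_, rfl, _⟩ := h
    rfl
  · rintro ⟨d, m⟩ h; rfl
  · rintro ⟨q, d, m⟩ h; rfl

lemma totient_eq (n : ℕ) (hn : 0 < n) :
    (Nat.totient n : ℝ) = ∑ x ∈ n.divisorsAntidiagonal, (moebius x.1 : ℝ) * (x.2 : ℝ) := by
  have := (sum_eq_iff_sum_mul_moebius_eq (R := ℝ) (f := fun n => (Nat.totient n : ℝ))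
    (g := fun n => (n : ℝ))).1 (fun n _ => by
      have := Nat.sum_totient n
      exact_mod_cast this) n hn
  exact this.symm

lemma hasSum_moebius : HasSum (fun d : ℕ => (moebius d : ℝ) / (d : ℝ) ^ 2) (6 / Real.pi ^ 2) := by
  have h2 : (1 : ℝ) < (2 : ℂ).re := by norm_num
  have hs := (LSeriesSummable_moebius_iff (s := 2)).2 h2
  have hv := LSeries_zeta_mul_Lseries_moebius h2
  rw [LSeries_zeta_eq_riemannZeta h2, riemannZeta_two] at hv
  have hpi : (Real.pi : ℂ) ≠ 0 := by exact_mod_cast Real.pi_ne_zero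
  have h3 := hs.hasSum
  have h4 : LSeries (fun n => ((moebius n : ℤ) : ℂ)) 2 = ((6 / Real.pi ^ 2 : ℝ) : ℂ) := by
    push_cast
    field_simp at hv ⊢
    linear_combination hv
  change HasSum _ (LSeries (fun n => ((moebius n : ℤ) : ℂ)) 2) at h3
  rw [h4] at h3
  rw [← Complex.hasSum_ofReal]
  convert h3 using 1
  ext n
  rcases Nat.eq_zero_or_pos n with rfl | h
  · simp
  · rw [LSeries.term_of_ne_zero h.ne']
    push_cast
    norm_cast

lemma tail (N : ℕ) : |∑ d ∈ Finset.Ioc 0 N, (moebius d : ℝ) / (d : ℝ) ^ 2 - 6 / Real.pi ^ 2|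
    ≤ (2 : ℝ) / ((N : ℝ) + 1) := by
  have ht := hasSum_moebius.tendsto_sum_nat
  have h0 : ∑ d ∈ Finset.Ioc 0 N, (moebius d : ℝ) / (d : ℝ) ^ 2
      = ∑ d ∈ Finset.range (N+1), (moebius d : ℝ) / (d : ℝ) ^ 2 := by
    apply Finset.sum_subset
    · intro x hx
      rw [Finset.mem_Ioc] at hx
      rw [Finset.mem_range]; omega
    · intro x; simp; intro h1 h2
      have : x = 0 := by omega
      subst this; simp
  rw [h0]
  have hlim := (tendsto_const_nhds (x := ∑ d ∈ Finset.range (N+1), (moebius d : ℝ) / (d : ℝ) ^ 2)).sub ht |>.abs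
  refine le_of_tendsto hlim ?_
  filter_upwards [Filter.eventually_ge_atTop (N+1)] with n hn
  rw [abs_sub_comm, ← Finset.sum_Ico_eq_sub _ hn]
  refine (Finset.abs_sum_le_sum_abs _ _).trans ?_
  refine le_trans ?_ (sum_Ioo_inv_sq_le N n)
  have : Finset.Ico (N+1) n = Finset.Ioo N n := by ext; simp
  rw [this]
  refine Finset.sum_le_sum fun i hi => ?_
  rw [abs_div, abs_of_nonneg (sq_nonneg (i:ℝ)), ← one_div]
  gcongr
  exact_mod_cast abs_moebius_le_one

lemma quarter (a : ℝ) (ha : 1 ≤ a) : ∫ t in (0:ℝ)..a, Real.sqrt (1 - t ^ 2) = Real.pi / 4 := by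
  have hc : Continuous (fun t : ℝ => Real.sqrt (1 - t ^ 2)) := by fun_prop
  have h1 := integral_sqrt_one_sub_sq
  rw [← intervalIntegral.integral_add_adjacent_intervals (b := 0) (hc.intervalIntegrable _ _) (hc.intervalIntegrable _ _)] at h1
  have h2 : ∫ t in (-1:ℝ)..0, Real.sqrt (1 - t ^ 2) = ∫ t in (0:ℝ)..1, Real.sqrt (1 - t ^ 2) := by
    have := intervalIntegral.integral_comp_neg (a := 0) (b := 1) (fun t : ℝ => Real.sqrt (1 - t ^ 2))
    simp at this
    exact this.symm
  rw [← intervalIntegral.integral_add_adjacent_intervals (b := 1) (hc.intervalIntegrable _ _) (hc.intervalIntegrable _ _)]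
  have h3 : ∫ t in (1:ℝ)..a, Real.sqrt (1 - t ^ 2) = ∫ t in (1:ℝ)..a, (0:ℝ) := by
    apply intervalIntegral.integral_congr
    intro t ht
    rw [Set.uIcc_of_le ha] at ht
    apply Real.sqrt_eq_zero_of_nonpos
    nlinarith [ht.1]
  rw [h3]; simp; linarith

lemma riemann (y : ℝ) (hy : 0 < y) (M : ℕ) (hM : 1 ≤ y * (M + 1)) :
    |∑ m ∈ Finset.Ioc 0 M, Real.sqrt (1 - (y * m) ^ 2) - Real.pi / (4 * y)| ≤ 1 := by
  set g : ℝ → ℝ := fun t => Real.sqrt (1 - (y * t) ^ 2) with hg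
  have hc : Continuous g := by fun_prop
  have hanti : AntitoneOn g (Set.Ici 0) := by
    intro s hs t ht hst
    simp only [Set.mem_Ici] at hs ht
    apply Real.sqrt_le_sqrt
    gcongr
  have hI : ∫ t in (0:ℝ)..((M+1 : ℕ) : ℝ), g t = Real.pi / (4 * y) := by
    have := intervalIntegral.integral_comp_mul_left (a := 0) (b := ((M+1 : ℕ) : ℝ)) (fun t : ℝ => Real.sqrt (1 - t ^ 2)) hy.ne'
    rw [mul_zero, quarter _ (by push_cast; exact hM)] at this
    rw [hg, this, smul_eq_mul]; field_simp
  have hsum : ∑ m ∈ Finset.Ioc 0 M, Real.sqrt (1 - (y * m) ^ 2) = ∑ i ∈ Finset.range M, g ((i+1 : ℕ)) := by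
    clear hM hI
    induction M with
    | zero => simp
    | succ k ih => rw [Finset.sum_Ioc_succ_top (Nat.zero_le k), ih, Finset.sum_range_succ]
  have hu := AntitoneOn.sum_le_integral (x₀ := 0) (a := M+1) (hanti.mono (fun x hx => hx.1))
  have hl := AntitoneOn.integral_le_sum (x₀ := 0) (a := M+1) (hanti.mono (fun x hx => hx.1))
  simp only [zero_add] at hu hl
  rw [hI] at hu hl
  rw [hsum]
  have g0 : g 0 = 1 := by simp [hg]
  rw [Finset.sum_range_succ] at hu
  rw [Finset.sum_range_succ'] at hl
  have gp : 0 ≤ g ((M+1 : ℕ)) := Real.sqrt_nonneg _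
  simp only [Nat.cast_zero, g0] at hl
  rw [abs_le]; constructor <;> linarith

lemma L_eq (ε s : ℝ) (hs0 : 0 < s) (hss : s ^ 2 = ε) :
    (∑' q : ℕ, if 1 ≤ q ∧ (q : ℝ) ^ 2 ≤ 1 / ε then
      (Nat.totient q : ℝ) * Real.sqrt (1 / (q : ℝ) ^ 2 - ε) else 0)
    = ∑ d ∈ Finset.Ioc 0 ⌊1 / s⌋₊, (moebius d : ℝ) / d *
      ∑ m ∈ Finset.Ioc 0 (⌊1 / s⌋₊ / d), Real.sqrt (1 - (s * d * m) ^ 2) := by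
  have hiff : ∀ q : ℕ, (1 ≤ q ∧ (q : ℝ) ^ 2 ≤ 1 / ε) ↔ q ∈ Finset.Ioc 0 ⌊1 / s⌋₊ := by
    intro q
    rw [Finset.mem_Ioc, Nat.le_floor_iff (by positivity), ← hss, ← one_div_pow,
      pow_le_pow_iff_left₀ (by positivity) (by positivity) (by norm_num)]
    rfl
  rw [tsum_eq_sum (s := Finset.Ioc 0 ⌊1 / s⌋₊)
    (fun q hq => if_neg (fun h => hq ((hiff q).1 h)))]
  simp_rw [Finset.mul_sum]
  rw [← double_sum ⌊1 / s⌋₊ (fun d m => (moebius d : ℝ) / d * Real.sqrt (1 - (s * d * m) ^ 2))]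
  refine Finset.sum_congr rfl fun q hq => ?_
  rw [if_pos ((hiff q).2 hq)]
  rw [Finset.mem_Ioc] at hq
  have hq0 : (0 : ℝ) < q := by exact_mod_cast hq.1
  rw [totient_eq q hq.1, Finset.sum_mul]
  refine Finset.sum_congr rfl fun x hx => ?_
  rw [Nat.mem_divisorsAntidiagonal] at hx
  have hxq : (x.1 : ℝ) * x.2 = q := by exact_mod_cast hx.1
  have e : 1 / (q : ℝ) ^ 2 - ε = (1 - (s * q) ^ 2) / (q : ℝ) ^ 2 := by
    rw [← hss]; field_simp
  rw [e, Real.sqrt_div' _ (by positivity), Real.sqrt_sq hq0.le, mul_assoc s, hxq]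
  have h1 : (x.1 : ℝ) ≠ 0 := by intro h; rw [h] at hxq; simp at hxq; linarith
  have h2 : (x.2 : ℝ) ≠ 0 := by intro h; rw [h] at hxq; simp at hxq; linarith
  rw [← hxq]
  field_simp

end FordAux

theorem L_eq_three_div_pi_add_sqrt_log_error :
    ∃ C : ℝ, 0 < C ∧ ∀ ε : ℝ, 0 < ε → ε ≤ 1 / 2 →
      |L ε - 3 / Real.pi| ≤ C * Real.sqrt ε * |Real.log ε| := by
  refine ⟨13, by norm_num, fun ε h0 h1 => ?_⟩
  set s := Real.sqrt ε with hs
  have hs0 : 0 < s := Real.sqrt_pos.2 h0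
  have hss : s ^ 2 = ε := Real.sq_sqrt h0.le
  set N := ⌊1 / s⌋₊ with hN
  have hN1 : (N : ℝ) ≤ 1 / s := Nat.floor_le (by positivity)
  have hN2 : 1 / s < (N : ℝ) + 1 := Nat.lt_floor_add_one _
  have hL := L_eq ε s hs0 hss
  rw [← hN] at hL
  have hsq : L ε = 2 * s * ∑ d ∈ Finset.Ioc 0 N, (ArithmeticFunction.moebius d : ℝ) / d *
      ∑ m ∈ Finset.Ioc 0 (N / d), Real.sqrt (1 - (s * d * m) ^ 2) := by
    rw [L, ← hs, hL]
  have hdiff : L ε - 3 / Real.pi = 2 * s * (∑ d ∈ Finset.Ioc 0 N,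
      (ArithmeticFunction.moebius d : ℝ) / d *
      (∑ m ∈ Finset.Ioc 0 (N / d), Real.sqrt (1 - (s * d * m) ^ 2) - Real.pi / (4 * (s * d))))
      + Real.pi / 2 * (∑ d ∈ Finset.Ioc 0 N, (ArithmeticFunction.moebius d : ℝ) / (d : ℝ) ^ 2
        - 6 / Real.pi ^ 2) := by
    rw [hsq]
    simp_rw [mul_sub, Finset.sum_sub_distrib]
    have e1 : ∑ d ∈ Finset.Ioc 0 N, (ArithmeticFunction.moebius d : ℝ) / d *
        (Real.pi / (4 * (s * d))) = Real.pi / (4 * s) *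
        ∑ d ∈ Finset.Ioc 0 N, (ArithmeticFunction.moebius d : ℝ) / (d : ℝ) ^ 2 := by
      rw [Finset.mul_sum]
      refine Finset.sum_congr rfl fun d hd => ?_
      have : (d : ℝ) ≠ 0 := by
        rw [Finset.mem_Ioc] at hd
        exact_mod_cast hd.1.ne'
      field_simp
    rw [e1]
    have := Real.pi_ne_zero
    field_simp
    ring
  have hA : |∑ d ∈ Finset.Ioc 0 N, (ArithmeticFunction.moebius d : ℝ) / d *
      (∑ m ∈ Finset.Ioc 0 (N / d), Real.sqrt (1 - (s * d * m) ^ 2) - Real.pi / (4 * (s * d)))|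
      ≤ 1 + Real.log N := by
    refine (Finset.abs_sum_le_sum_abs _ _).trans ?_
    have hh := harmonic_le_one_add_log N
    rw [harmonic_eq_sum_Icc] at hh
    push_cast at hh
    refine le_trans ?_ hh
    have e : Finset.Icc 1 N = Finset.Ioc 0 N := by
      ext x; rw [Finset.mem_Icc, Finset.mem_Ioc]; omega
    rw [e]
    refine Finset.sum_le_sum fun d hd => ?_
    rw [Finset.mem_Ioc] at hd
    have hd0 : (0 : ℝ) < d := by exact_mod_cast hd.1
    have hr := riemann (s * d) (by positivity) (N / d) (by
      have a1 : N + 1 ≤ d * (N / d + 1) := by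
        have := Nat.lt_mul_div_succ N hd.1
        omega
      have a2 : (N : ℝ) + 1 ≤ d * (((N / d : ℕ) : ℝ) + 1) := by exact_mod_cast a1
      have a3 : 1 / s ≤ d * (((N / d : ℕ) : ℝ) + 1) := by linarith
      rw [div_le_iff₀ hs0] at a3
      linarith)
    rw [abs_mul, abs_div, abs_of_pos hd0]
    have hmu : |(ArithmeticFunction.moebius d : ℝ)| ≤ 1 := by
      exact_mod_cast ArithmeticFunction.abs_moebius_le_one
    calc _ ≤ 1 / (d : ℝ) * 1 := by gcongr
      _ = _ := by simp
  have hB := tail N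
  have hB2 : (2 : ℝ) / ((N : ℝ) + 1) ≤ 2 * s := by
    rw [div_lt_iff₀ hs0] at hN2
    rw [div_le_iff₀ (by positivity)]
    linarith
  have hlogs : Real.log ε = 2 * Real.log s := by
    rw [← hss, Real.log_pow]; norm_num
  have hlogN : Real.log N ≤ - Real.log s := by
    have hs1 : s ≤ 1 := by nlinarith
    have : 1 ≤ N := Nat.le_floor (by rw [le_div_iff₀ hs0]; simpa using hs1)
    have h := Real.log_le_log (by exact_mod_cast this) hN1
    rwa [one_div, Real.log_inv] at h
  have hl2 : Real.log ε ≤ - (1 / 2) := by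
    have h := Real.log_le_log h0 h1
    rw [one_div, Real.log_inv] at h
    have := Real.log_two_gt_d9
    linarith
  rw [abs_of_nonpos (by linarith : Real.log ε ≤ 0), hdiff]
  refine (abs_add_le _ _).trans ?_
  rw [abs_mul (2 * s), abs_mul (Real.pi / 2), abs_of_pos (by positivity : 0 < 2 * s),
    abs_of_pos (by positivity : 0 < Real.pi / 2)]
  have hpi := Real.pi_lt_four
  calc _ ≤ 2 * s * (1 + - Real.log s) + 4 / 2 * (2 * s) := by
        gcongr
        · linarith
        · linarith
    _ = s * (6 - Real.log ε) := by rw [hlogs]; ring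
    _ ≤ s * (13 * - Real.log ε) := by gcongr; linarith
    _ = _ := by ring
end

section
/- For every 0 < ε ≤ 1/2, the Lebesgue measure of the set R_ε = {x ∈ [0,1] : there exist integers a and q ≥ 1 with gcd(a,q) = 1 such that (x − a/q)² + (ε − 1/(2q²))² ≤ 1/(4q⁴)} equals 2√ε · Σ_{q ≥ 1, q² ≤ 1/ε} φ(q)·√(1/q² − ε), where φ is Euler's totient function. -/
open MeasureTheory

/-- half chord -/
noncomputable def fordRad (ε : ℝ) (q : ℕ) : ℝ := Real.sqrt ε * Real.sqrt (1 / (q : ℝ) ^ 2 - ε)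

/-- piece -/
noncomputable def fordPiece (ε : ℝ) (p : (_ : ℕ) × ℕ) : Set ℝ :=
  Set.Icc ((p.2 : ℝ) / p.1 - fordRad ε p.1) ((p.2 : ℝ) / p.1 + fordRad ε p.1) ∩ Set.Icc 0 1

lemma fordRad_nonneg (ε : ℝ) (q : ℕ) : 0 ≤ fordRad ε q := by unfold fordRad; positivity

lemma fordRad_sq {ε : ℝ} (hε : 0 < ε) {q : ℕ} (hq : 1 ≤ q) (h : (q : ℝ) ^ 2 ≤ 1 / ε) :
    fordRad ε q ^ 2 = ε * (1 / (q : ℝ) ^ 2 - ε) := by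
  have hq' : (1 : ℝ) ≤ q := by exact_mod_cast hq
  have h2 : ε ≤ 1 / (q : ℝ) ^ 2 := by
    rw [le_div_iff₀ (by positivity)] at *
    linarith
  unfold fordRad
  rw [mul_pow, Real.sq_sqrt hε.le, Real.sq_sqrt (by linarith)]

lemma fordRad_add {ε : ℝ} (hε : 0 < ε) {q s : ℕ} (hq : 1 ≤ q) (hs : 1 ≤ s)
    (h : (q : ℝ) ^ 2 ≤ 1 / ε) (h' : (s : ℝ) ^ 2 ≤ 1 / ε) :
    fordRad ε q + fordRad ε s ≤ 1 / ((q : ℝ) * s) := by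
  have hq' : (1 : ℝ) ≤ q := by exact_mod_cast hq
  have hs' : (1 : ℝ) ≤ s := by exact_mod_cast hs
  have h2 : ε ≤ 1 / (q : ℝ) ^ 2 := by
    rw [le_div_iff₀ (by positivity)] at *
    linarith
  have h3 : ε ≤ 1 / (s : ℝ) ^ 2 := by
    rw [le_div_iff₀ (by positivity)] at *
    linarith
  have hA := Real.sq_sqrt (sub_nonneg.2 h2)
  have hB := Real.sq_sqrt (sub_nonneg.2 h3)
  have hE := Real.sq_sqrt hε.le
  unfold fordRad
  set A := Real.sqrt (1 / (q : ℝ) ^ 2 - ε)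
  set B := Real.sqrt (1 / (s : ℝ) ^ 2 - ε)
  set e := Real.sqrt ε
  have key : (1 / ((q : ℝ) * s)) ^ 2 = (A * B - e ^ 2) ^ 2 + (e * A + e * B) ^ 2 := by
    have : (1 / ((q : ℝ) * s)) ^ 2 = (A ^ 2 + e ^ 2) * (B ^ 2 + e ^ 2) := by
      rw [hA, hB, hE]; field_simp; ring
    rw [this]; ring
  have h0 : (0 : ℝ) ≤ 1 / ((q : ℝ) * s) := by positivity
  refine (abs_le_of_sq_le_sq' ?_ h0).2
  rw [key]
  linarith [sq_nonneg (A * B - e ^ 2)]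

lemma frac_diff {q s a b : ℕ} (hq : 1 ≤ q) (hs : 1 ≤ s) (ha : Nat.Coprime q a)
    (hb : Nat.Coprime s b) (hne : ¬ (q = s ∧ a = b)) :
    1 / ((q : ℝ) * s) ≤ |(a : ℝ) / q - (b : ℝ) / s| := by
  have hq' : (1 : ℝ) ≤ q := by exact_mod_cast hq
  have hs' : (1 : ℝ) ≤ s := by exact_mod_cast hs
  have hz : (a : ℤ) * s - b * q ≠ 0 := by
    intro h0
    have h1 : a * s = b * q := by zify; linarith
    apply hne
    have d1 : q ∣ s := ha.dvd_of_dvd_mul_left (h1 ▸ Dvd.intro_left b rfl)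
    have d2 : s ∣ q := hb.dvd_of_dvd_mul_left (h1 ▸ Dvd.intro_left a rfl)
    have e := Nat.dvd_antisymm d1 d2
    subst e
    exact ⟨rfl, Nat.eq_of_mul_eq_mul_right hq h1⟩
  have h1 : (1 : ℝ) ≤ |(a : ℝ) * s - b * q| := by exact_mod_cast Int.one_le_abs hz
  have : (a : ℝ) / q - (b : ℝ) / s = (a * s - b * q) / (q * s) := by
    field_simp
  rw [this, abs_div, abs_of_pos (by positivity : (0 : ℝ) < q * s)]
  gcongr

lemma icc_inter {c r d t : ℝ} (h : r + t ≤ |c - d|) :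
    volume (Set.Icc (c - r) (c + r) ∩ Set.Icc (d - t) (d + t)) = 0 := by
  rcases le_total c d with h1 | h1
  · rw [abs_of_nonpos (by linarith)] at h
    refine measure_mono_null (t := {c + r}) ?_ (by simp)
    rintro x ⟨⟨_, _⟩, ⟨_, _⟩⟩
    simp only [Set.mem_singleton_iff]; linarith
  · rw [abs_of_nonneg (by linarith)] at h
    refine measure_mono_null (t := {c - r}) ?_ (by simp)
    rintro x ⟨⟨_, _⟩, ⟨_, _⟩⟩
    simp only [Set.mem_singleton_iff]; linarith

lemma ford_iff {ε : ℝ} (x : ℝ) (a : ℝ) {q : ℝ} (hq : 1 ≤ q) :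
    (x - a / q) ^ 2 + (ε - 1 / (2 * q ^ 2)) ^ 2 ≤ 1 / (4 * q ^ 4) ↔
      (x - a / q) ^ 2 ≤ ε * (1 / q ^ 2 - ε) := by
  have : (ε - 1 / (2 * q ^ 2)) ^ 2 = 1 / (4 * q ^ 4) - ε * (1 / q ^ 2 - ε) := by
    field_simp; ring
  rw [this]
  constructor <;> intro h <;> linarith

lemma fordRad_le {ε : ℝ} (hε : 0 < ε) {q : ℕ} (hq : 1 ≤ q) (h : (q : ℝ) ^ 2 ≤ 1 / ε) :
    fordRad ε q ≤ 1 / (2 * (q : ℝ) ^ 2) := by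
  have := fordRad_add hε hq hq h h
  have e : 1 / ((q : ℝ) * q) = 2 * (1 / (2 * (q : ℝ) ^ 2)) := by
    have : (1 : ℝ) ≤ q := by exact_mod_cast hq
    field_simp
  linarith

/-- denominators -/
noncomputable def fordQ (ε : ℝ) : Finset ℕ := by
  classical
  exact (Finset.range (⌊1 / ε⌋₊ + 1)).filter (fun q => 1 ≤ q ∧ (q : ℝ) ^ 2 ≤ 1 / ε)

lemma mem_fordQ {ε : ℝ} {q : ℕ} : q ∈ fordQ ε ↔ 1 ≤ q ∧ (q : ℝ) ^ 2 ≤ 1 / ε := by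
  classical
  simp only [fordQ, Finset.mem_filter, Finset.mem_range, and_iff_right_iff_imp]
  rintro ⟨h1, h2⟩
  have h1' : (1 : ℝ) ≤ q := by exact_mod_cast h1
  exact Nat.lt_succ_of_le (Nat.le_floor (by nlinarith))

/-- index set -/
noncomputable def fordIdx (ε : ℝ) : Finset ((_ : ℕ) × ℕ) :=
  (fordQ ε).sigma (fun q => (Finset.range (q + 1)).filter (fun a => q.Coprime a))

lemma mem_fordIdx {ε : ℝ} {q a : ℕ} : (⟨q, a⟩ : (_ : ℕ) × ℕ) ∈ fordIdx ε ↔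
    (1 ≤ q ∧ (q : ℝ) ^ 2 ≤ 1 / ε) ∧ a ≤ q ∧ q.Coprime a := by
  simp [fordIdx, mem_fordQ, Nat.lt_succ_iff]

lemma fordSet_eq {ε : ℝ} (hε : 0 < ε) :
    fordSet ε = ⋃ p ∈ fordIdx ε, fordPiece ε p := by
  ext x
  simp only [fordSet, Set.mem_setOf_eq, Set.mem_iUnion, exists_prop]
  constructor
  · rintro ⟨hx, a, q, hq, hg, h⟩
    lift q to ℕ using by omega
    have hq1 : 1 ≤ q := by exact_mod_cast hq
    have hq' : (1 : ℝ) ≤ q := by exact_mod_cast hq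
    simp only [Int.cast_natCast] at h
    rw [ford_iff x a hq'] at h
    have h2 : ε ≤ 1 / (q : ℝ) ^ 2 := by
      by_contra! hc
      nlinarith [sq_nonneg (x - (a : ℝ) / q)]
    have h3 : (q : ℝ) ^ 2 ≤ 1 / ε := by
      rw [le_div_iff₀ (by positivity)] at *
      linarith
    rw [← fordRad_sq hε hq1 h3] at h
    have h4 := abs_le_of_sq_le_sq' h (fordRad_nonneg ε q)
    have h5 := fordRad_le hε hq1 h3
    have h6 : 1 / (2 * (q : ℝ) ^ 2) < 1 / q := by
      rw [div_lt_div_iff₀ (by positivity) (by positivity)]; nlinarith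
    have ha0 : 0 ≤ a := by
      by_contra! hc
      have : (a : ℝ) ≤ -1 := by exact_mod_cast (by omega : a ≤ -1)
      have : (a : ℝ) / q ≤ -1 / q := by gcongr
      have e : (-1 : ℝ) / q = - (1 / q) := by ring
      linarith [hx.1]
    lift a to ℕ using ha0
    have haq : a ≤ q := by
      by_contra! hc
      have : (q : ℝ) + 1 ≤ a := by exact_mod_cast hc
      have : ((q : ℝ) + 1) / q ≤ a / q := by gcongr
      have e : ((q : ℝ) + 1) / q = 1 + 1 / q := by field_simp
      simp only [Int.cast_natCast] at h4
      linarith [hx.2]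
    refine ⟨⟨q, a⟩, mem_fordIdx.2 ⟨⟨hq1, h3⟩, haq, ?_⟩, ?_, hx⟩
    · rw [Nat.coprime_comm]; simpa [Nat.Coprime] using hg
    · simp only [Int.cast_natCast] at h4
      constructor <;> simp only <;> linarith
  · rintro ⟨⟨q, a⟩, hp, hx, hx01⟩
    obtain ⟨⟨hq, h3⟩, haq, hc⟩ := mem_fordIdx.1 hp
    have hq' : (1 : ℝ) ≤ q := by exact_mod_cast hq
    refine ⟨hx01, a, q, by exact_mod_cast hq, ?_, ?_⟩
    · rw [Nat.coprime_comm] at hc; simpa [Nat.Coprime] using hc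
    · simp only [Int.cast_natCast]
      rw [ford_iff x a hq', ← fordRad_sq hε hq h3]
      apply sq_le_sq'
      · linarith [hx.1]
      · linarith [hx.2]

lemma piece_vol {ε : ℝ} (hε : 0 < ε) {q : ℕ} (hq : 1 ≤ q) (h : (q : ℝ) ^ 2 ≤ 1 / ε) :
    ∑ a ∈ (Finset.range (q + 1)).filter (fun a => q.Coprime a),
      (volume (fordPiece ε ⟨q, a⟩)).toReal = 2 * (Nat.totient q * fordRad ε q) := by
  have hr := fordRad_nonneg ε q
  have hr2 := fordRad_le hε hq h
  have hq' : (1 : ℝ) ≤ q := by exact_mod_cast hq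
  rcases hq.eq_or_lt with h1 | h1
  · subst h1
    have : (Finset.range (1 + 1)).filter (fun a => Nat.Coprime 1 a) = {0, 1} := by decide
    rw [this, Finset.sum_pair (by norm_num)]
    norm_num at hr2
    simp only [fordPiece, Set.Icc_inter_Icc, Real.volume_Icc]
    norm_num
    rw [max_eq_right (by linarith), min_eq_left (by linarith), max_eq_left (by linarith), min_eq_right (by linarith)]
    rw [ENNReal.toReal_ofReal (by linarith), ENNReal.toReal_ofReal (by linarith)]
    ring
  · have key : ∀ a ∈ (Finset.range (q + 1)).filter (fun a => q.Coprime a),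
        (volume (fordPiece ε ⟨q, a⟩)).toReal = 2 * fordRad ε q := by
      intro a ha
      simp only [Finset.mem_filter, Finset.mem_range] at ha
      obtain ⟨haq, hc⟩ := ha
      have h0 : 1 ≤ a := by
        by_contra! h0
        have : a = 0 := by omega
        subst this
        simp at hc; omega
      have h2 : a + 1 ≤ q := by
        by_contra! h0
        have : a = q := by omega
        subst this
        simp at hc; omega
      have h6 : 1 / (2 * (q : ℝ) ^ 2) < 1 / q := by
        rw [div_lt_div_iff₀ (by positivity) (by positivity)]; nlinarith
      have h0' : (1 : ℝ) ≤ a := by exact_mod_cast h0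
      have h2' : (a : ℝ) + 1 ≤ q := by exact_mod_cast h2
      have h7 : (1 : ℝ) / q ≤ a / q := by gcongr
      have h8 : ((a : ℝ) + 1) / q ≤ 1 := by rw [div_le_one (by positivity)]; exact h2'
      rw [add_div] at h8
      simp only [fordPiece, Set.Icc_inter_Icc, Real.volume_Icc]
      rw [max_eq_left (by linarith), min_eq_left (by linarith), ENNReal.toReal_ofReal (by linarith)]
      ring
    rw [Finset.sum_congr rfl key, Finset.sum_const, nsmul_eq_mul]
    have : (Finset.range (q + 1)).filter (fun a => q.Coprime a) =
        (Finset.range q).filter (fun a => q.Coprime a) := by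
      rw [Finset.range_add_one, Finset.filter_insert, if_neg]
      simp; omega
    rw [this, ← Nat.totient_eq_card_coprime]
    ring

theorem fordSet_volume_eq :
    ∀ ε : ℝ, 0 < ε → ε ≤ 1 / 2 →
      (volume (fordSet ε)).toReal =
        2 * Real.sqrt ε *
          ∑' q : ℕ, if 1 ≤ q ∧ (q : ℝ) ^ 2 ≤ 1 / ε then
            (Nat.totient q : ℝ) * Real.sqrt (1 / (q : ℝ) ^ 2 - ε) else 0 := by
  intro ε hε _
  rw [fordSet_eq hε, measure_biUnion_finset₀]
  · rw [ENNReal.toReal_sum]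
    · rw [fordIdx, Finset.sum_sigma, tsum_eq_sum (s := fordQ ε), Finset.mul_sum]
      · apply Finset.sum_congr rfl
        intro q hq
        have hq := mem_fordQ.1 hq
        rw [piece_vol hε hq.1 hq.2, if_pos hq, fordRad]
        ring
      · intro q hq
        rw [mem_fordQ] at hq
        rw [if_neg hq]
    · intro p _
      exact ((measure_mono Set.inter_subset_right).trans_lt (by simp)).ne
  · rintro ⟨q, a⟩ hp ⟨s, b⟩ hp' hne
    obtain ⟨⟨hq, h3⟩, haq, hc⟩ := mem_fordIdx.1 hp
    obtain ⟨⟨hs, h3'⟩, hbs, hc'⟩ := mem_fordIdx.1 hp'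
    refine measure_mono_null (Set.inter_subset_inter Set.inter_subset_left Set.inter_subset_left)
      (icc_inter ((fordRad_add hε hq hs h3 h3').trans (frac_diff hq hs hc hc' ?_)))
    rintro ⟨rfl, rfl⟩
    exact hne rfl
  · intro p _
    exact (measurableSet_Icc.inter measurableSet_Icc).nullMeasurableSet
end

section
/- Let I ⊆ [0,1] be an interval of positive length |I| and let δ > 0. Define S_I(ε) = 2√ε · Σ_{q ≥ 1, q² ≤ 1/ε} Σ_{a : a/q ∈ I, gcd(a,q)=1} √(1/q² − ε). Then there is a constant C(δ) depending only on δ such that for all 0 < ε ≤ 1/2 one has |S_I(ε) − |I|·L(ε)| ≤ C(δ)·ε^{1/2−δ}. -/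
open MeasureTheory

/-- `S_I ε = 2√ε · Σ_{q ≥ 1, q² ≤ 1/ε} Σ_{a : a/q ∈ I, gcd(a,q)=1} √(1/q² − ε)`. -/
noncomputable def SI (I : Set ℝ) (ε : ℝ) : ℝ :=
  2 * Real.sqrt ε *
    ∑' q : ℕ, if 1 ≤ q ∧ (q : ℝ) ^ 2 ≤ 1 / ε then
      ({a : ℤ | (a : ℝ) / q ∈ I ∧ Int.gcd a q = 1}.ncard : ℝ) *
        Real.sqrt (1 / (q : ℝ) ^ 2 - ε) else 0

lemma fd_count (I : Set ℝ) (a b t : ℝ) (ht : 0 < t) (hab : a ≤ b) (h1 : Set.Ioo a b ⊆ I)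
    (h2 : I ⊆ Set.Icc a b) :
    {n : ℤ | (n : ℝ) / t ∈ I}.Finite ∧
    |({n : ℤ | (n : ℝ) / t ∈ I}.ncard : ℝ) - (b - a) * t| ≤ 1 := by
  have hsub : {n : ℤ | (n : ℝ) / t ∈ I} ⊆ ((Finset.Icc ⌈a * t⌉ ⌊b * t⌋ : Finset ℤ) : Set ℤ) := by
    intro n hn
    have := h2 hn
    rw [Set.mem_Icc, le_div_iff₀ ht, div_le_iff₀ ht] at this
    simp only [Finset.coe_Icc, Set.mem_Icc]
    exact ⟨Int.ceil_le.2 this.1, Int.le_floor.2 this.2⟩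
  have hsup : ((Finset.Ioo ⌊a * t⌋ ⌈b * t⌉ : Finset ℤ) : Set ℤ) ⊆ {n : ℤ | (n : ℝ) / t ∈ I} := by
    intro n hn
    simp only [Finset.coe_Ioo, Set.mem_Ioo] at hn
    apply h1
    rw [Set.mem_Ioo, lt_div_iff₀ ht, div_lt_iff₀ ht]
    exact ⟨Int.floor_lt.1 hn.1, Int.lt_ceil.1 hn.2⟩
  have hfin : {n : ℤ | (n : ℝ) / t ∈ I}.Finite := (Finset.finite_toSet _).subset hsub
  refine ⟨hfin, ?_⟩
  have u1 := Set.ncard_le_ncard hsub (Finset.finite_toSet _)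
  have u2 := Set.ncard_le_ncard hsup hfin
  rw [Set.ncard_coe_finset, Int.card_Icc] at u1
  rw [Set.ncard_coe_finset, Int.card_Ioo] at u2
  have hle : a * t ≤ b * t := by gcongr
  have f1 := Int.floor_le (b * t)
  have f2 := Int.le_ceil (a * t)
  have f3 := Int.le_ceil (b * t)
  have f4 := Int.floor_le (a * t)
  have f5 : ⌈a * t⌉ ≤ ⌊b * t⌋ + 1 :=
    (Int.ceil_mono hle).trans (Int.ceil_le_floor_add_one _)
  have v1 : (({n : ℤ | (n : ℝ) / t ∈ I}.ncard : ℤ)) ≤ ⌊b * t⌋ + 1 - ⌈a * t⌉ := by omega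
  have v2 : ⌈b * t⌉ - ⌊a * t⌋ - 1 ≤ (({n : ℤ | (n : ℝ) / t ∈ I}.ncard : ℤ)) := by omega
  have w1 : (({n : ℤ | (n : ℝ) / t ∈ I}.ncard : ℝ)) ≤ ⌊b * t⌋ + 1 - ⌈a * t⌉ := by exact_mod_cast v1
  have w2 : (⌈b * t⌉ : ℝ) - ⌊a * t⌋ - 1 ≤ (({n : ℤ | (n : ℝ) / t ∈ I}.ncard : ℝ)) := by
    exact_mod_cast v2
  rw [abs_le]
  constructor <;> nlinarith

lemma fd_fiber (I : Set ℝ) (n g : ℕ) (hn : 0 < n) (hg : g ∣ n) :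
    {a : ℤ | (a : ℝ) / n ∈ I ∧ Int.gcd a n = g}.ncard =
    {a : ℤ | (a : ℝ) / (n / g : ℕ) ∈ I ∧ Int.gcd a (n / g : ℕ) = 1}.ncard := by
  obtain ⟨m, rfl⟩ := hg
  have hg0 : 0 < g := Nat.pos_of_mul_pos_right hn
  have hgz : (g : ℤ) ≠ 0 := by exact_mod_cast hg0.ne'
  have hgr : (g : ℝ) ≠ 0 := by exact_mod_cast hg0.ne'
  rw [Nat.mul_div_cancel_left _ hg0]
  rw [← Set.ncard_image_of_injective (f := fun b : ℤ => (g : ℤ) * b)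
    {a : ℤ | (a : ℝ) / m ∈ I ∧ Int.gcd a m = 1} (mul_right_injective₀ hgz)]
  congr 1
  ext a
  simp only [Set.mem_ofPred_eq, Set.mem_image]
  have key : ∀ b : ℤ, Int.gcd ((g : ℤ) * b) ((g * m : ℕ) : ℤ) = g * Int.gcd b m := by
    intro b
    push_cast
    rw [Int.gcd_mul_left]; simp
  have key2 : ∀ b : ℤ, (((g : ℤ) * b : ℤ) : ℝ) / ((g * m : ℕ) : ℝ) = (b : ℝ) / m := by
    intro b
    push_cast
    rw [mul_div_mul_left _ _ hgr]
  constructor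
  · rintro ⟨h1, h2⟩
    have : (g : ℤ) ∣ a := by
      have := Int.gcd_dvd_left a ((g * m : ℕ) : ℤ)
      rwa [h2] at this
    obtain ⟨b, rfl⟩ := this
    rw [key2] at h1
    rw [key] at h2
    exact ⟨b, ⟨h1, Nat.eq_of_mul_eq_mul_left hg0 (by simpa using h2)⟩, rfl⟩
  · rintro ⟨b, ⟨h1, h2⟩, rfl⟩
    rw [key2, key, h2]
    exact ⟨h1, by simp⟩

lemma fd_sum (I : Set ℝ) (n : ℕ) (hn : 0 < n) (hfin : {a : ℤ | (a : ℝ) / n ∈ I}.Finite) :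
    ∑ d ∈ n.divisors, {a : ℤ | (a : ℝ) / d ∈ I ∧ Int.gcd a d = 1}.ncard =
    {a : ℤ | (a : ℝ) / n ∈ I}.ncard := by
  classical
  rw [← Nat.sum_div_divisors n (fun d : ℕ => {a : ℤ | (a : ℝ) / d ∈ I ∧ Int.gcd a d = 1}.ncard)]
  rw [Set.ncard_eq_toFinset_card _ hfin]
  rw [Finset.card_eq_sum_card_fiberwise (f := fun a : ℤ => Int.gcd a n) (t := n.divisors)]
  · apply Finset.sum_congr rfl
    intro g hg
    rw [← fd_fiber I n g hn (Nat.dvd_of_mem_divisors hg), ← Set.ncard_coe_finset]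
    congr 1
    ext a
    simp
  · intro a _
    simp only [Finset.mem_coe, Nat.mem_divisors]
    refine ⟨?_, hn.ne'⟩
    have := Int.gcd_dvd_right a (n : ℤ)
    exact_mod_cast this

lemma fd_err (I : Set ℝ) (a b : ℝ) (hab : a ≤ b) (h1 : Set.Ioo a b ⊆ I)
    (h2 : I ⊆ Set.Icc a b) (n : ℕ) (hn : 0 < n) :
    |({x : ℤ | (x : ℝ) / n ∈ I ∧ Int.gcd x n = 1}.ncard : ℝ) - (b - a) * n.totient|
      ≤ (n.divisorsAntidiagonal.card : ℝ) := by
  have H := (ArithmeticFunction.sum_eq_iff_sum_mul_moebius_eq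
    (f := fun n : ℕ => ({x : ℤ | (x : ℝ) / n ∈ I ∧ Int.gcd x n = 1}.ncard : ℝ)
      - (b - a) * n.totient)
    (g := fun n : ℕ => ({x : ℤ | (x : ℝ) / n ∈ I}.ncard : ℝ) - (b - a) * n)).1 (by
      intro n hn
      rw [Finset.sum_sub_distrib, ← Finset.mul_sum]
      congr 1
      · exact_mod_cast fd_sum I n hn
          (fd_count I a b n (by exact_mod_cast hn) hab h1 h2).1
      · congr 1
        exact_mod_cast Nat.sum_totient n) n hn
  rw [← H]
  refine (Finset.abs_sum_le_sum_abs _ _).trans ?_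
  rw [Finset.card_eq_sum_ones]
  push_cast
  apply Finset.sum_le_sum
  intro p hp
  rw [abs_mul]
  have hp2 : 0 < p.2 := Nat.pos_of_ne_zero (Nat.ne_zero_of_mem_divisorsAntidiagonal hp).2
  have e1 : |((ArithmeticFunction.moebius p.1 : ℤ) : ℝ)| ≤ 1 := by
    exact_mod_cast ArithmeticFunction.abs_moebius_le_one
  have e2 := (fd_count I a b p.2 (by exact_mod_cast hp2) hab h1 h2).2
  exact mul_le_one₀ e1 (abs_nonneg _) e2

lemma fd_div (Q : ℕ) :
    ∑ q ∈ Finset.Icc 1 Q, (q.divisorsAntidiagonal.card : ℝ) * (1 / q) ≤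
      (harmonic Q : ℝ) ^ 2 := by
  classical
  have e : (harmonic Q : ℝ) ^ 2 =
      ∑ p ∈ Finset.Icc 1 Q ×ˢ Finset.Icc 1 Q, ((p.1 : ℝ)⁻¹ * (p.2 : ℝ)⁻¹) := by
    rw [sq, harmonic_eq_sum_Icc]
    push_cast
    rw [Finset.sum_mul_sum, Finset.sum_product]
  rw [e]
  refine le_trans ?_ (Finset.sum_fiberwise_le_sum_of_sum_fiber_nonneg (t := Finset.Icc 1 Q)
    (g := fun p : ℕ × ℕ => p.1 * p.2) ?_)
  · apply Finset.sum_le_sum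
    intro q hq
    rw [Finset.mem_Icc] at hq
    rw [Finset.card_eq_sum_ones]
    push_cast
    rw [Finset.sum_mul]
    have : q.divisorsAntidiagonal ⊆
        {p ∈ Finset.Icc 1 Q ×ˢ Finset.Icc 1 Q | p.1 * p.2 = q} := by
      intro p hp
      have hz := Nat.ne_zero_of_mem_divisorsAntidiagonal hp
      rw [Nat.mem_divisorsAntidiagonal] at hp
      have l1 : p.1 ≤ q := Nat.le_of_dvd (by omega) ⟨p.2, hp.1.symm⟩
      have l2 : p.2 ≤ q := Nat.le_of_dvd (by omega) ⟨p.1, by rw [mul_comm]; exact hp.1.symm⟩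
      simp only [Finset.mem_filter, Finset.mem_product, Finset.mem_Icc]
      omega
    refine le_trans (le_of_eq ?_) (Finset.sum_le_sum_of_subset_of_nonneg this ?_)
    · apply Finset.sum_congr rfl
      intro p hp
      rw [Nat.mem_divisorsAntidiagonal] at hp
      rw [← hp.1]
      push_cast
      rw [one_mul, one_div, mul_inv]
    · intros; positivity
  · intros
    apply Finset.sum_nonneg
    intros; positivity

lemma fd_interval (I : Set ℝ) (hI : I.OrdConnected) (hs : I ⊆ Set.Icc (0 : ℝ) 1)
    (hv : 0 < (volume I).toReal) :
    ∃ a b : ℝ, a ≤ b ∧ Set.Ioo a b ⊆ I ∧ I ⊆ Set.Icc a b ∧ (volume I).toReal = b - a := by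
  have hne : I.Nonempty := by
    rw [Set.nonempty_iff_ne_empty]
    rintro rfl
    simp at hv
  have hb : BddBelow I := bddBelow_Icc.mono hs
  have ha : BddAbove I := bddAbove_Icc.mono hs
  have h2 : I ⊆ Set.Icc (sInf I) (sSup I) := subset_Icc_csInf_csSup hb ha
  have h1 : Set.Ioo (sInf I) (sSup I) ⊆ I := by
    intro x hx
    obtain ⟨y, hy, hyx⟩ := exists_lt_of_csInf_lt hne hx.1
    obtain ⟨z, hz, hxz⟩ := exists_lt_of_lt_csSup hne hx.2
    exact hI.out hy hz ⟨hyx.le, hxz.le⟩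
  have hab : sInf I ≤ sSup I := csInf_le_csSup hne hb ha
  refine ⟨sInf I, sSup I, hab, h1, h2, ?_⟩
  have v : volume I = ENNReal.ofReal (sSup I - sInf I) := by
    apply le_antisymm
    · simpa using measure_mono (μ := volume) h2
    · simpa using measure_mono (μ := volume) h1
  rw [v, ENNReal.toReal_ofReal (by linarith)]

lemma fd_tsum (f : ℕ → ℝ) (ε : ℝ) (hε : 0 < ε) :
    ∑' q : ℕ, (if 1 ≤ q ∧ (q : ℝ) ^ 2 ≤ 1 / ε then f q else 0) =
    ∑ q ∈ Finset.Icc 1 ⌊1 / Real.sqrt ε⌋₊, f q := by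
  have hiff : ∀ q : ℕ, (1 ≤ q ∧ (q : ℝ) ^ 2 ≤ 1 / ε) ↔ q ∈ Finset.Icc 1 ⌊1 / Real.sqrt ε⌋₊ := by
    intro q
    rw [Finset.mem_Icc, Nat.le_floor_iff (by positivity)]
    have : (1 / ε) = (1 / Real.sqrt ε) ^ 2 := by
      rw [div_pow, Real.sq_sqrt hε.le, one_pow]
    rw [this, pow_le_pow_iff_left₀ (by positivity) (by positivity) (by norm_num)]
  rw [tsum_eq_sum (s := Finset.Icc 1 ⌊1 / Real.sqrt ε⌋₊)]
  · apply Finset.sum_congr rfl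
    intro q hq
    rw [if_pos ((hiff q).2 hq)]
  · intro q hq
    rw [if_neg (fun h => hq ((hiff q).1 h))]

theorem SI_eq_length_mul_L_add_error :
    ∀ δ : ℝ, 0 < δ → ∃ C : ℝ, 0 < C ∧
      ∀ I : Set ℝ, I.OrdConnected → I ⊆ Set.Icc (0 : ℝ) 1 → 0 < (volume I).toReal →
        ∀ ε : ℝ, 0 < ε → ε ≤ 1 / 2 →
          |SI I ε - (volume I).toReal * L ε| ≤ C * ε ^ ((1 : ℝ) / 2 - δ) := by
  intro δ hδ
  refine ⟨2 * (1 + 1 / δ) ^ 2, by positivity, ?_⟩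
  intro I hI hs hv ε hε hε2
  obtain ⟨a, b, hab, h1, h2, hvol⟩ := fd_interval I hI hs hv
  rw [hvol]
  unfold SI L
  rw [fd_tsum _ ε hε, fd_tsum _ ε hε]
  set X := 1 / Real.sqrt ε with hX
  have hsq : 0 < Real.sqrt ε := Real.sqrt_pos.2 hε
  have hX1 : 1 ≤ X := by
    rw [hX, le_div_iff₀ hsq, one_mul]
    exact Real.sqrt_le_one.2 (by linarith)
  have hX0 : 0 < X := by linarith
  set Q := ⌊X⌋₊ with hQ
  have main : |∑ q ∈ Finset.Icc 1 Q, ({x : ℤ | (x : ℝ) / q ∈ I ∧ Int.gcd x q = 1}.ncard : ℝ) *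
        Real.sqrt (1 / (q : ℝ) ^ 2 - ε) - (b - a) * ∑ q ∈ Finset.Icc 1 Q,
        (Nat.totient q : ℝ) * Real.sqrt (1 / (q : ℝ) ^ 2 - ε)| ≤ (harmonic Q : ℝ) ^ 2 := by
    rw [Finset.mul_sum, ← Finset.sum_sub_distrib]
    refine (Finset.abs_sum_le_sum_abs _ _).trans (le_trans ?_ (fd_div Q))
    apply Finset.sum_le_sum
    intro q hq
    rw [Finset.mem_Icc] at hq
    rw [← mul_assoc, ← sub_mul, abs_mul, abs_of_nonneg (Real.sqrt_nonneg _)]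
    apply mul_le_mul (fd_err I a b hab h1 h2 q hq.1) _ (Real.sqrt_nonneg _) (by positivity)
    rw [Real.sqrt_le_left (by positivity), div_pow, one_pow]
    linarith
  have hharm : (harmonic Q : ℝ) ≤ (1 + 1 / δ) * X ^ δ := by
    have l1 := harmonic_floor_le_one_add_log X hX1
    have l2 := Real.log_le_rpow_div hX0.le hδ
    have l3 := Real.one_le_rpow hX1 hδ.le
    calc (harmonic Q : ℝ) ≤ 1 + Real.log X := l1
      _ ≤ X ^ δ + X ^ δ / δ := by linarith
      _ = _ := by ring
  have hh0 : (0 : ℝ) ≤ harmonic Q := by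
    rw [harmonic_eq_sum_Icc]; push_cast
    exact Finset.sum_nonneg (fun _ _ => by positivity)
  have hXp : (X ^ δ) ^ 2 = ε ^ (-δ) := by
    rw [hX, one_div, Real.sqrt_eq_rpow, ← Real.rpow_neg hε.le, ← Real.rpow_mul hε.le,
      ← Real.rpow_natCast, ← Real.rpow_mul hε.le]
    congr 1
    push_cast
    ring
  rw [mul_left_comm, ← mul_sub, abs_mul, abs_of_pos (by positivity : 0 < 2 * Real.sqrt ε)]
  calc _ ≤ 2 * Real.sqrt ε * ((1 + 1 / δ) * X ^ δ) ^ 2 := by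
        refine mul_le_mul_of_nonneg_left (main.trans ?_) (by positivity)
        exact pow_le_pow_left₀ hh0 hharm 2
    _ = _ := by
        rw [mul_pow, hXp, sub_eq_add_neg, Real.rpow_add hε, ← Real.sqrt_eq_rpow]
        ring
end

section
/- Let f : ℍ → ℝ be continuous, SL(2,ℤ)-invariant, and compactly supported in the quotient. Then lim_{ε→0⁺} ∫₀¹ f(x + iε) dx = (3/π) · ∫_F f(x+iy) · y⁻² dx dy. -/
open MeasureTheory Complex

/-- The standard fundamental domain for `SL(2,ℤ)` acting on the upper half-plane, viewed as a
subset of `ℝ × ℝ` (coordinates `(x, y)` with `z = x + iy`). -/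
def fundDom : Set (ℝ × ℝ) :=
  {p | |p.1| < 1 / 2 ∧ 1 < p.1 ^ 2 + p.2 ^ 2 ∧ 0 < p.2}

/-- rounding to the lattice `h ℤ²` -/
noncomputable def cellFloor (h : ℝ) (x : ℝ × ℝ) : ℤ × ℤ := (⌊x.1 / h⌋, ⌊x.2 / h⌋)

noncomputable def latPt (h : ℝ) (v : ℤ × ℤ) : ℝ × ℝ := (h * v.1, h * v.2)

lemma measurable_cellFloor (h : ℝ) : Measurable (cellFloor h) := by
  unfold cellFloor; fun_prop

lemma cellFloor_preimage {h : ℝ} (hh : 0 < h) (v : ℤ × ℤ) :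
    cellFloor h ⁻¹' {v} = Set.Ico (h * v.1) (h * v.1 + h) ×ˢ Set.Ico (h * v.2) (h * v.2 + h) := by
  ext x
  simp only [cellFloor, Set.mem_preimage, Set.mem_singleton_iff, Prod.ext_iff, Set.mem_prod,
    Set.mem_Ico, Int.floor_eq_iff, le_div_iff₀ hh, div_lt_iff₀ hh]
  constructor <;> rintro ⟨⟨h1, h2⟩, h3, h4⟩ <;> refine ⟨⟨?_, ?_⟩, ?_, ?_⟩ <;> nlinarith

lemma map_cellFloor_singleton {h : ℝ} (hh : 0 < h) (v : ℤ × ℤ) :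
    (Measure.map (cellFloor h) (volume : Measure (ℝ × ℝ))).real {v} = h ^ 2 := by
  rw [Measure.real, Measure.map_apply (measurable_cellFloor h) (measurableSet_singleton v),
    cellFloor_preimage hh, Measure.volume_eq_prod, Measure.prod_prod]
  simp [hh.le, sq]

lemma latPt_bound {h : ℝ} (hh : 0 < h) (x : ℝ × ℝ) :
    |(latPt h (cellFloor h x)).1 - x.1| ≤ h ∧ |(latPt h (cellFloor h x)).2 - x.2| ≤ h := by
  have key : ∀ t : ℝ, |h * (⌊t / h⌋ : ℝ) - t| ≤ h := by
    intro t
    have h1 := Int.floor_le (t / h)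
    have h2 := Int.lt_floor_add_one (t / h)
    rw [le_div_iff₀ hh] at h1
    rw [div_lt_iff₀ hh] at h2
    rw [abs_le]; constructor <;> nlinarith
  exact ⟨key _, key _⟩

section A
variable {H : ℝ × ℝ → ℝ} {R : ℝ}

lemma H_support_finite
    (hs : ∀ v, H v ≠ 0 → |v.1| ≤ R ∧ |v.2| ≤ R) {h : ℝ} (hh : 0 < h) :
    (Function.support fun v => H (latPt h v)).Finite := by
  obtain ⟨N, hN⟩ := exists_nat_ge (R / h)
  refine Set.Finite.subset (Set.finite_Icc ((-N, -N) : ℤ × ℤ) (N, N)) ?_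
  intro v hv
  obtain ⟨h1, h2⟩ := hs _ hv
  have key : ∀ n : ℤ, |h * (n : ℝ)| ≤ R → -(N : ℤ) ≤ n ∧ n ≤ N := by
    intro n hn
    rw [abs_mul, abs_of_pos hh] at hn
    have : |(n : ℝ)| ≤ N := le_trans (by rw [le_div_iff₀ hh]; linarith) hN
    rw [abs_le] at this
    exact ⟨by exact_mod_cast this.1, by exact_mod_cast this.2⟩
  have k1 := key _ h1
  have k2 := key _ h2
  exact ⟨⟨k1.1, k2.1⟩, ⟨k1.2, k2.2⟩⟩

noncomputable def latSum (H : ℝ × ℝ → ℝ) (h : ℝ) : ℝ := h ^ 2 * ∑' v : ℤ × ℤ, H (latPt h v)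

lemma latSum_eq
    (hs : ∀ v, H v ≠ 0 → |v.1| ≤ R ∧ |v.2| ≤ R) {h : ℝ} (hh : 0 < h) :
    latSum H h = ∫ x, H (latPt h (cellFloor h x)) := by
  have hm := measurable_cellFloor h
  have hsm : AEStronglyMeasurable (fun v => H (latPt h v)) (Measure.map (cellFloor h) volume) :=
    Measurable.aestronglyMeasurable (measurable_of_countable _)
  rw [← integral_map (f := fun v => H (latPt h v)) hm.aemeasurable hsm, integral_countable]
  · simp_rw [map_cellFloor_singleton hh, smul_eq_mul]
    rw [tsum_mul_left]; rfl
  · have hfin := H_support_finite hs hh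
    rw [← integrableOn_iff_integrable_of_support_subset (subset_refl _)]
    have : ∀ v, Measure.map (cellFloor h) volume {v} < ⊤ := by
      intro v
      rw [lt_top_iff_ne_top]
      intro h0
      have := map_cellFloor_singleton hh v
      rw [Measure.real, h0] at this
      rw [ENNReal.toReal_top] at this
      exact (pow_pos hh 2).ne this
    have hf2 : Measure.map (cellFloor h) volume (Function.support fun v => H (latPt h v)) < ⊤ := by
      rw [← Set.biUnion_of_singleton (Function.support fun v => H (latPt h v))]
      exact measure_biUnion_lt_top hfin (fun v _ => this v)
    obtain ⟨C, hC⟩ := (hfin.image (fun v => ‖H (latPt h v)‖)).bddAbove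
    exact IntegrableOn.of_bound hf2 hsm.restrict C
      ((ae_restrict_iff' hfin.measurableSet).2 (Filter.Eventually.of_forall fun v hv =>
        hC (Set.mem_image_of_mem _ hv)))

lemma cell_dom {B : ℝ} (hB0 : 0 ≤ B) (hB : ∀ v, |H v| ≤ B)
    (hs : ∀ v, H v ≠ 0 → |v.1| ≤ R ∧ |v.2| ≤ R) {h : ℝ} (hh : 0 < h) (hhR : h ≤ R) (x : ℝ × ℝ) :
    ‖H (latPt h (cellFloor h x))‖ ≤
      (Set.Icc (-(2*R)) (2*R) ×ˢ Set.Icc (-(2*R)) (2*R)).indicator (fun _ => B) x := by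
  by_cases h0 : H (latPt h (cellFloor h x)) = 0
  · rw [h0, norm_zero]; exact Set.indicator_nonneg (fun _ _ => hB0) _
  · rw [Set.indicator_of_mem]
    · exact hB _
    · obtain ⟨h1, h2⟩ := hs _ h0
      obtain ⟨h3, h4⟩ := latPt_bound hh x
      rw [abs_le] at h1 h2 h3 h4
      exact ⟨⟨by linarith, by linarith⟩, ⟨by linarith, by linarith⟩⟩

lemma box_integrable (B : ℝ) : Integrable
    ((Set.Icc (-(2*R)) (2*R) ×ˢ Set.Icc (-(2*R)) (2*R)).indicator (fun _ : ℝ × ℝ => B)) := by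
  rw [integrable_indicator_iff (measurableSet_Icc.prod measurableSet_Icc)]
  refine integrableOn_const ?_
  exact (isCompact_Icc.prod isCompact_Icc).measure_lt_top.ne

lemma latSum_bound (h0 : H 0 = 0) {B : ℝ} (hB0 : 0 ≤ B) (hB : ∀ v, |H v| ≤ B)
    (hs : ∀ v, H v ≠ 0 → |v.1| ≤ R ∧ |v.2| ≤ R) :
    ∃ C, ∀ h, 0 < h → |latSum H h| ≤ C := by
  refine ⟨∫ x, (Set.Icc (-(2*R)) (2*R) ×ˢ Set.Icc (-(2*R)) (2*R)).indicator
    (fun _ : ℝ × ℝ => B) x, fun h hh => ?_⟩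
  rcases le_or_gt h R with hhR | hhR
  · rw [latSum_eq hs hh, ← Real.norm_eq_abs]
    refine norm_integral_le_of_norm_le (box_integrable B) ?_
    exact Filter.Eventually.of_forall (cell_dom hB0 hB hs hh hhR)
  · have : ∀ v : ℤ × ℤ, H (latPt h v) = 0 := by
      intro v
      by_contra hne
      obtain ⟨h1, h2⟩ := hs _ hne
      have key : ∀ n : ℤ, |h * (n : ℝ)| ≤ R → n = 0 := by
        intro n hn
        by_contra hn0
        have : (1 : ℝ) ≤ |(n : ℝ)| := by exact_mod_cast Int.one_le_abs hn0
        rw [abs_mul, abs_of_pos hh] at hn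
        nlinarith
      apply hne
      rw [← h0]; congr 1
      simp [latPt, key _ h1, key _ h2]
    simp only [latSum, this, tsum_zero, mul_zero, abs_zero]
    exact integral_nonneg fun x => Set.indicator_nonneg (fun _ _ => hB0) _

lemma latSum_tendsto (hR : 0 < R) (hc : Continuous H) {B : ℝ} (hB0 : 0 ≤ B) (hB : ∀ v, |H v| ≤ B)
    (hs : ∀ v, H v ≠ 0 → |v.1| ≤ R ∧ |v.2| ≤ R) :
    Filter.Tendsto (latSum H) (nhdsWithin 0 (Set.Ioi 0)) (nhds (∫ x, H x)) := by
  have hev : ∀ᶠ h : ℝ in nhdsWithin 0 (Set.Ioi 0), 0 < h ∧ h ≤ R := by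
    filter_upwards [Ioc_mem_nhdsGT hR] with h hh using hh
  have : Filter.Tendsto (fun h => ∫ x, H (latPt h (cellFloor h x))) (nhdsWithin 0 (Set.Ioi 0))
      (nhds (∫ x, H x)) := by
    refine tendsto_integral_filter_of_dominated_convergence _ ?_ ?_ (box_integrable (R := R) B) ?_
    · refine Filter.Eventually.of_forall fun h => Measurable.aestronglyMeasurable ?_
      exact (measurable_of_countable (fun v => H (latPt h v))).comp (measurable_cellFloor h)
    · filter_upwards [hev] with h hh
      exact Filter.Eventually.of_forall (cell_dom hB0 hB hs hh.1 hh.2)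
    · refine Filter.Eventually.of_forall fun x => ?_
      refine (hc.tendsto x).comp ?_
      have hid : Filter.Tendsto (fun h : ℝ => h) (nhdsWithin 0 (Set.Ioi 0)) (nhds 0) :=
        tendsto_nhdsWithin_of_tendsto_nhds Filter.tendsto_id
      rw [Prod.tendsto_iff]
      constructor
      · rw [tendsto_iff_dist_tendsto_zero]
        refine squeeze_zero' (Filter.Eventually.of_forall fun _ => dist_nonneg) ?_ hid
        filter_upwards [hev] with h hh using (latPt_bound hh.1 x).1
      · rw [tendsto_iff_dist_tendsto_zero]
        refine squeeze_zero' (Filter.Eventually.of_forall fun _ => dist_nonneg) ?_ hid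
        filter_upwards [hev] with h hh using (latPt_bound hh.1 x).2
  refine this.congr' ?_
  filter_upwards [hev] with h hh using (latSum_eq hs hh.1).symm

lemma moebius_sum : ∑' d : ℕ, (ArithmeticFunction.moebius d : ℝ) / (d : ℝ) ^ 2 = 6 / Real.pi ^ 2 := by
  have h2 : (1 : ℝ) < (2 : ℂ).re := by norm_num
  have h := ArithmeticFunction.LSeries_zeta_mul_Lseries_moebius h2
  rw [ArithmeticFunction.LSeries_zeta_eq_riemannZeta h2, riemannZeta_two] at h
  have hl : LSeries (fun n => ((ArithmeticFunction.moebius n : ℤ) : ℂ)) 2 =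
      ((∑' d : ℕ, (ArithmeticFunction.moebius d : ℝ) / (d : ℝ) ^ 2 : ℝ) : ℂ) := by
    rw [LSeries, Complex.ofReal_tsum]
    congr 1; ext n
    rw [LSeries.term_def]
    split_ifs with hn
    · simp [hn]
    · push_cast; congr 1; norm_cast
  rw [hl] at h
  have hr : Real.pi ^ 2 / 6 * ∑' d : ℕ, (ArithmeticFunction.moebius d : ℝ) / (d : ℝ) ^ 2 = 1 := by
    exact_mod_cast h
  have := Real.pi_pos
  field_simp at hr ⊢
  linarith

open Classical in
noncomputable def primSum (H : ℝ × ℝ → ℝ) (h : ℝ) : ℝ :=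
  h ^ 2 * ∑' v : ℤ × ℤ, if IsCoprime v.1 v.2 then H (latPt h v) else 0

lemma coprime_moebius (w : ℤ × ℤ) (hw : w ≠ 0) [Decidable (IsCoprime w.1 w.2)] :
    (∑' d : ℕ, if (d : ℤ) ∣ w.1 ∧ (d : ℤ) ∣ w.2 then (ArithmeticFunction.moebius d : ℝ) else 0)
      = if IsCoprime w.1 w.2 then 1 else 0 := by
  have hg : Int.gcd w.1 w.2 ≠ 0 := by
    rw [Ne, Int.gcd_eq_zero_iff]; rintro ⟨h1, h2⟩; exact hw (Prod.ext h1 h2)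
  have h1 : ∀ d : ℕ, ((d : ℤ) ∣ w.1 ∧ (d : ℤ) ∣ w.2) ↔ d ∈ (Int.gcd w.1 w.2).divisors := by
    intro d
    rw [Nat.mem_divisors, Int.dvd_gcd_iff]
    tauto
  simp_rw [h1]
  rw [tsum_eq_sum (s := (Int.gcd w.1 w.2).divisors) (by intro b hb; simp [hb])]
  rw [Finset.sum_congr rfl (g := fun d => ((ArithmeticFunction.moebius d : ℤ) : ℝ))
    (by intro d hd; simp only [hd, if_true])]
  have := congrArg (fun F => F (Int.gcd w.1 w.2)) ArithmeticFunction.moebius_mul_coe_zeta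
  simp only [ArithmeticFunction.coe_mul_zeta_apply, ArithmeticFunction.one_apply] at this
  rw [← Int.cast_sum, this]
  simp only [Int.isCoprime_iff_gcd_eq_one]
  split_ifs <;> simp

lemma primSum_eq (h0 : H 0 = 0)
    (hs : ∀ v, H v ≠ 0 → |v.1| ≤ R ∧ |v.2| ≤ R) {h : ℝ} (hh : 0 < h) :
    primSum H h = ∑' d : ℕ, (ArithmeticFunction.moebius d : ℝ) / (d : ℝ) ^ 2 * latSum H (h * d) := by
  classical
  have hfin := H_support_finite hs hh
  set W := hfin.toFinset with hW
  have hWn : ∀ w, w ∉ W → H (latPt h w) = 0 := by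
    intro w hw; by_contra hne; exact hw (by simp [hW, hne])
  have hW0 : ∀ w ∈ W, w ≠ 0 := by
    rintro w hw rfl
    simp [hW] at hw
    exact hw (by rw [← h0]; congr 1; simp [latPt])
  have hterm : ∀ d : ℕ, (ArithmeticFunction.moebius d : ℝ) / (d : ℝ) ^ 2 * latSum H (h * d) =
      h ^ 2 * ∑ w ∈ W, (if (d : ℤ) ∣ w.1 ∧ (d : ℤ) ∣ w.2 then
        (ArithmeticFunction.moebius d : ℝ) else 0) * H (latPt h w) := by
    intro d
    rcases Nat.eq_zero_or_pos d with rfl | hd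
    · simp
    have hd' : (d : ℤ) ≠ 0 := by exact_mod_cast hd.ne'
    have hinj : Function.Injective (fun v : ℤ × ℤ => ((d : ℤ) * v.1, (d : ℤ) * v.2)) := by
      intro v w hvw
      simp only [Prod.mk.injEq, mul_eq_mul_left_iff, hd', or_false] at hvw
      exact Prod.ext hvw.1 hvw.2
    have e1 : ∑' v : ℤ × ℤ, H (latPt (h * d) v) =
        ∑' w : ℤ × ℤ, (if (d : ℤ) ∣ w.1 ∧ (d : ℤ) ∣ w.2 then H (latPt h w) else 0) := by
      rw [← hinj.tsum_eq (f := fun w : ℤ × ℤ =>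
        if (d : ℤ) ∣ w.1 ∧ (d : ℤ) ∣ w.2 then H (latPt h w) else 0)]
      · congr 1; ext v
        rw [if_pos ⟨dvd_mul_right _ _, dvd_mul_right _ _⟩]
        congr 1; simp [latPt, mul_assoc]
      · intro w hw
        simp only [Function.mem_support, ne_eq, ite_eq_right_iff, not_forall] at hw
        obtain ⟨⟨⟨a, ha⟩, ⟨b, hb⟩⟩, -⟩ := hw
        exact ⟨(a, b), Prod.ext ha.symm hb.symm⟩
    rw [latSum, e1, tsum_eq_sum (s := W) (by intro w hw; simp [hWn w hw])]
    have hd2 : (d : ℝ) ≠ 0 := by exact_mod_cast hd.ne'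
    rw [Finset.mul_sum, Finset.mul_sum, Finset.mul_sum]
    refine Finset.sum_congr rfl fun w _ => ?_
    split_ifs
    · field_simp
    · simp
  simp_rw [hterm]
  rw [tsum_mul_left, Summable.tsum_finsetSum]
  · rw [primSum, tsum_eq_sum (s := W) (by intro w hw; simp [hWn w hw])]
    congr 1
    refine Finset.sum_congr rfl fun w hw => ?_
    rw [tsum_mul_right, coprime_moebius w (hW0 w hw)]
    split_ifs <;> simp
  · intro w hw
    refine Summable.mul_right _ ?_
    refine summable_of_hasFiniteSupport ?_
    refine Set.Finite.subset (Finset.finite_toSet (Int.gcd w.1 w.2).divisors) ?_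
    intro d hd
    have hg : Int.gcd w.1 w.2 ≠ 0 := by
      rw [Ne, Int.gcd_eq_zero_iff]; rintro ⟨h1, h2⟩; exact hW0 w hw (Prod.ext h1 h2)
    simp only [Function.mem_support, ne_eq, ite_eq_right_iff, not_forall] at hd
    obtain ⟨⟨h1, h2⟩, -⟩ := hd
    simp only [Finset.mem_coe, Nat.mem_divisors]
    exact ⟨Int.dvd_gcd_iff.2 ⟨h1, h2⟩, hg⟩

theorem primSum_tendsto (hR : 0 < R) (hc : Continuous H) (h0 : H 0 = 0)
    {B : ℝ} (hB0 : 0 ≤ B) (hB : ∀ v, |H v| ≤ B)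
    (hs : ∀ v, H v ≠ 0 → |v.1| ≤ R ∧ |v.2| ≤ R) :
    Filter.Tendsto (primSum H) (nhdsWithin 0 (Set.Ioi 0)) (nhds (6 / Real.pi ^ 2 * ∫ x, H x)) := by
  obtain ⟨C, hC⟩ := latSum_bound h0 hB0 hB hs
  have hT := latSum_tendsto hR hc hB0 hB hs
  have hC0 : 0 ≤ C := (abs_nonneg _).trans (hC 1 one_pos)
  rw [← moebius_sum, ← tsum_mul_right]
  have hsum : Summable (fun d : ℕ => C * (1 / (d : ℝ) ^ 2)) :=
    (Real.summable_one_div_nat_pow.2 (by norm_num)).mul_left C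
  have : Filter.Tendsto (fun h => ∑' d : ℕ, (ArithmeticFunction.moebius d : ℝ) / (d : ℝ) ^ 2 *
      latSum H (h * d)) (nhdsWithin 0 (Set.Ioi 0))
      (nhds (∑' d : ℕ, (ArithmeticFunction.moebius d : ℝ) / (d : ℝ) ^ 2 * ∫ x, H x)) := by
    refine tendsto_tsum_of_dominated_convergence hsum ?_ ?_
    · intro d
      rcases Nat.eq_zero_or_pos d with rfl | hd
      · simp
      have hd' : (0 : ℝ) < d := by exact_mod_cast hd
      refine Filter.Tendsto.const_mul _ (hT.comp ?_)
      rw [tendsto_nhdsWithin_iff]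
      constructor
      · have : Filter.Tendsto (fun h : ℝ => h * d) (nhds 0) (nhds (0 * d)) :=
          (continuous_id.mul continuous_const).tendsto 0
        rw [zero_mul] at this
        exact tendsto_nhdsWithin_of_tendsto_nhds this
      · filter_upwards [self_mem_nhdsWithin] with h hh using mul_pos hh hd'
    · filter_upwards [self_mem_nhdsWithin] with h hh d
      rcases Nat.eq_zero_or_pos d with rfl | hd
      · simp
      have hd' : (0 : ℝ) < d := by exact_mod_cast hd
      have hm : |(ArithmeticFunction.moebius d : ℝ)| ≤ 1 := by
        exact_mod_cast ArithmeticFunction.abs_moebius_le_one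
      have := hC (h * d) (mul_pos hh hd')
      rw [norm_mul, norm_div, Real.norm_eq_abs, Real.norm_eq_abs, Real.norm_eq_abs,
        abs_of_pos (pow_pos hd' 2), mul_comm C]
      gcongr
  refine this.congr' ?_
  filter_upwards [self_mem_nhdsWithin] with h hh using (primSum_eq h0 hs hh).symm
end A
/-- the horocycle attached to `v`, parametrised by arc length -/
noncomputable def mob (v : ℝ × ℝ) (t : ℝ) : ℂ :=
  ((v.1 : ℂ) * (t + I) - (v.2 / (v.1 ^ 2 + v.2 ^ 2) : ℝ)) /
    ((v.2 : ℂ) * (t + I) + (v.1 / (v.1 ^ 2 + v.2 ^ 2) : ℝ))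

def GoodPt (z : ℂ) : Prop := |z.re| ≠ 1 / 2 ∧ normSq z ≠ 1

lemma normSq_pos_of_ne {v : ℝ × ℝ} (hv : v ≠ 0) : 0 < v.1 ^ 2 + v.2 ^ 2 := by
  by_contra h
  apply hv
  have h1 : v.1 ^ 2 = 0 := by nlinarith [sq_nonneg v.1, sq_nonneg v.2]
  have h2 : v.2 ^ 2 = 0 := by nlinarith [sq_nonneg v.1, sq_nonneg v.2]
  exact Prod.ext (pow_eq_zero_iff (two_ne_zero) |>.1 h1) (pow_eq_zero_iff (two_ne_zero) |>.1 h2)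

lemma mob_zero (t : ℝ) : mob 0 t = 0 := by simp [mob]

lemma mob_shift {a b c d : ℝ} (h : a * d - b * c = 1) (t : ℝ) :
    ((a : ℂ) * (t + I) + b) / ((c : ℂ) * (t + I) + d) =
      mob (a, c) (t + (a * b + c * d) / (a ^ 2 + c ^ 2)) := by
  have hv : ((a, c) : ℝ × ℝ) ≠ 0 := by
    intro h0
    simp only [Prod.mk_eq_zero] at h0
    rw [h0.1, h0.2] at h; norm_num at h
  have hN := (normSq_pos_of_ne hv).ne'
  simp only at hN
  have e1 : b = a * ((a * b + c * d) / (a ^ 2 + c ^ 2)) - c / (a ^ 2 + c ^ 2) := by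
    field_simp; linear_combination (-c) * h
  have e2 : d = c * ((a * b + c * d) / (a ^ 2 + c ^ 2)) + a / (a ^ 2 + c ^ 2) := by
    field_simp; linear_combination a * h
  have e1' : (b : ℂ) = a * (((a * b + c * d) / (a ^ 2 + c ^ 2) : ℝ) : ℂ)
      - ((c / (a ^ 2 + c ^ 2) : ℝ) : ℂ) := by exact_mod_cast e1
  have e2' : (d : ℂ) = c * (((a * b + c * d) / (a ^ 2 + c ^ 2) : ℝ) : ℂ)
      + ((a / (a ^ 2 + c ^ 2) : ℝ) : ℂ) := by exact_mod_cast e2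
  unfold mob
  simp only
  rw [Complex.ofReal_add]
  congr 1
  · linear_combination e1'
  · linear_combination e2'

lemma cdiv_formulas (P Q a c : ℝ) (h : Q ^ 2 + c ^ 2 ≠ 0) :
    (((P : ℂ) + a * I) / (Q + c * I)).re = (P * Q + a * c) / (Q ^ 2 + c ^ 2) ∧
    (((P : ℂ) + a * I) / (Q + c * I)).im = (a * Q - P * c) / (Q ^ 2 + c ^ 2) ∧
    normSq (((P : ℂ) + a * I) / (Q + c * I)) = (P ^ 2 + a ^ 2) / (Q ^ 2 + c ^ 2) := by
  have hn : normSq ((Q : ℂ) + c * I) = Q ^ 2 + c ^ 2 := by simp [normSq_apply]; ring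
  refine ⟨?_, ?_, ?_⟩
  · rw [Complex.div_re, hn]; simp; field_simp
  · rw [Complex.div_im, hn]; simp; field_simp
  · rw [normSq_div, hn]; simp [normSq_apply]; ring

lemma mob_form (v : ℝ × ℝ) (t : ℝ) : mob v t =
    (((v.1 * t - v.2 / (v.1 ^ 2 + v.2 ^ 2) : ℝ) : ℂ) + v.1 * I) /
    (((v.2 * t + v.1 / (v.1 ^ 2 + v.2 ^ 2) : ℝ) : ℂ) + v.2 * I) := by
  unfold mob; push_cast; congr 1 <;> ring

lemma mob_den_pos {v : ℝ × ℝ} (hv : v ≠ 0) (t : ℝ) :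
    0 < (v.2 * t + v.1 / (v.1 ^ 2 + v.2 ^ 2)) ^ 2 + v.2 ^ 2 := by
  have hN := normSq_pos_of_ne hv
  rcases eq_or_ne v.2 0 with h | h
  · have h1 : v.1 ≠ 0 := by
      intro h1; rw [h, h1] at hN; norm_num at hN
    rw [h]; simp only [zero_mul, zero_add]
    have : v.1 / (v.1 ^ 2 + 0 ^ 2) ≠ 0 := by
      rw [h] at hN; exact div_ne_zero h1 hN.ne'
    positivity
  · positivity

lemma mob_im {v : ℝ × ℝ} (hv : v ≠ 0) (t : ℝ) :
    (mob v t).im = 1 / ((v.2 * t + v.1 / (v.1 ^ 2 + v.2 ^ 2)) ^ 2 + v.2 ^ 2) := by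
  have hN := (normSq_pos_of_ne hv).ne'
  rw [mob_form, (cdiv_formulas _ _ _ _ (mob_den_pos hv t).ne').2.1]
  congr 1; field_simp; ring

lemma mob_im_pos {v : ℝ × ℝ} (hv : v ≠ 0) (t : ℝ) : 0 < (mob v t).im := by
  rw [mob_im hv]; exact one_div_pos.2 (mob_den_pos hv t)

lemma quad_finite {a b c : ℝ} (h : a ≠ 0 ∨ b ≠ 0) : {t : ℝ | a * t ^ 2 + b * t + c = 0}.Finite := by
  classical
  have hp : (Polynomial.C a * Polynomial.X ^ 2 + Polynomial.C b * Polynomial.X + Polynomial.C c) ≠ 0 := by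
    intro h0
    have h1 := congrArg (fun p => Polynomial.coeff p 2) h0
    have h2 := congrArg (fun p => Polynomial.coeff p 1) h0
    simp [Polynomial.coeff_C] at h1 h2
    rcases h with h | h
    · exact h h1
    · exact h h2
  refine (Polynomial.finite_setOfPred_isRoot hp).subset ?_
  intro t ht
  simpa [Polynomial.IsRoot] using ht

lemma mob_good {v : ℝ × ℝ} (hv : v ≠ 0) : ∀ᵐ t : ℝ, GoodPt (mob v t) := by
  have hN := (normSq_pos_of_ne hv)
  obtain ⟨a, c⟩ := v
  set N := a ^ 2 + c ^ 2 with hNdef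
  replace hN : 0 < N := hN
  have f1 : {t : ℝ | (a ^ 2 - c ^ 2) * t ^ 2 + (-4 * a * c / N) * t +
      ((c / N) ^ 2 + a ^ 2 - (a / N) ^ 2 - c ^ 2) = 0}.Finite := by
    apply quad_finite
    by_contra! h
    obtain ⟨h1, h2⟩ := h
    have h2' : a * c = 0 := by
      field_simp at h2; nlinarith
    apply hN.ne'
    rcases mul_eq_zero.1 h2' with h | h
    · rw [hNdef, h] at *; nlinarith
    · rw [hNdef, h] at *; nlinarith
  have f2 : ∀ σ : ℝ, σ ^ 2 = 1 → {t : ℝ | (2 * a * c - σ * c ^ 2) * t ^ 2 +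
      (2 * (a ^ 2 - c ^ 2) / N - 2 * σ * a * c / N) * t +
      (-2 * a * c / N ^ 2 + 2 * a * c - σ * (a / N) ^ 2 - σ * c ^ 2) = 0}.Finite := by
    intro σ hσ
    apply quad_finite
    by_contra! h
    obtain ⟨h1, h2⟩ := h
    have h2' : a ^ 2 - c ^ 2 - σ * a * c = 0 := by
      field_simp at h2; nlinarith
    have h1' : c * (2 * a - σ * c) = 0 := by linarith
    apply hN.ne'
    rcases mul_eq_zero.1 h1' with h | h
    · rw [hNdef]; rw [h] at h2' ⊢; nlinarith
    · have hc : a = σ * c / 2 := by linarith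
      rw [hNdef]; rw [hc] at h2' ⊢
      have : c ^ 2 * (σ ^ 2 / 4 + 1) = 0 := by nlinarith
      nlinarith
  have n1 := f1.countable.ae_notMem (volume : Measure ℝ)
  have n2 := (f2 1 (by norm_num)).countable.ae_notMem (volume : Measure ℝ)
  have n3 := (f2 (-1) (by norm_num)).countable.ae_notMem (volume : Measure ℝ)
  filter_upwards [n1, n2, n3] with t h1 h2 h3
  have hD := mob_den_pos hv t
  replace hD : 0 < (c * t + a / N) ^ 2 + c ^ 2 := hD
  obtain ⟨r1, -, r3⟩ := cdiv_formulas (a * t - c / N) (c * t + a / N) a c hD.ne'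
  unfold GoodPt
  rw [mob_form]
  simp only [← hNdef]
  rw [r1, r3]
  clear_value N
  constructor
  · intro h
    rcases (abs_eq (by norm_num : (0 : ℝ) ≤ 1 / 2)).1 h with h | h
    · rw [div_eq_iff hD.ne'] at h
      apply h2; linear_combination 2 * h
    · rw [div_eq_iff hD.ne'] at h
      apply h3; linear_combination 2 * h
  · intro h
    rw [div_eq_iff hD.ne'] at h
    apply h1; linear_combination h

lemma mob_bounds_aux {a c x y P Q N t Y : ℝ} (hY : 1 ≤ Y) (h1 : |x| ≤ 1 / 2) (h2 : 1 / 2 ≤ y)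
    (h3 : y ≤ Y) (hNdef : N = a ^ 2 + c ^ 2) (hN : 0 < N)
    (hyD : y * (Q ^ 2 + c ^ 2) = 1) (e1 : a - c * x = Q * y)
    (ht : t * N = a * P + c * Q) (hP2 : P ^ 2 + a ^ 2 = (x ^ 2 + y ^ 2) * (Q ^ 2 + c ^ 2)) :
    (|a| ≤ Y + 2 ∧ |c| ≤ Y + 2) ∧ 1 ≤ 2 * (2 + Y ^ 2) * N ∧ |t| ≤ 2 * (2 + Y ^ 2) := by
  have hy0 : 0 < y := by linarith
  have e2 : (a - c * x) ^ 2 + (c * y) ^ 2 = y := by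
    rw [e1]; linear_combination y * hyD
  have hx2 : x ^ 2 ≤ 1 / 4 := by
    rw [← sq_abs]; calc |x| ^ 2 ≤ (1 / 2) ^ 2 := by gcongr
      _ = 1 / 4 := by norm_num
  have hQc : Q ^ 2 + c ^ 2 ≤ 2 := by
    have h0 : 0 ≤ Q ^ 2 + c ^ 2 := by positivity
    have : 1 / 2 * (Q ^ 2 + c ^ 2) ≤ y * (Q ^ 2 + c ^ 2) := by gcongr
    linarith
  have hc2 : c ^ 2 ≤ 2 := by linarith [sq_nonneg Q]
  have hc : |c| ≤ 2 := abs_le_of_sq_le_sq (by norm_num; linarith) (by norm_num : (0:ℝ) ≤ 2)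
  have hYY : Y ≤ Y ^ 2 := by
    calc Y = 1 * Y := by ring
      _ ≤ Y * Y := by gcongr
      _ = Y ^ 2 := by ring
  have hax : |a - c * x| ≤ Y :=
    abs_le_of_sq_le_sq (by linarith [sq_nonneg (c*y)]) (by linarith)
  have hcx : |c * x| ≤ 1 := by
    rw [abs_mul]
    calc |c| * |x| ≤ 2 * (1 / 2) := by gcongr
      _ = 1 := by norm_num
  have ha : |a| ≤ Y + 1 := by
    calc |a| = |(a - c * x) + c * x| := by ring_nf
      _ ≤ |a - c * x| + |c * x| := abs_add_le _ _
      _ ≤ Y + 1 := by linarith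
  have hy2 : y ^ 2 ≤ Y ^ 2 := by gcongr
  have hlow : 1 ≤ 2 * (2 + Y ^ 2) * N := by
    have k1 : (a - c * x) ^ 2 ≤ 2 * a ^ 2 + 2 * (c ^ 2 * x ^ 2) := by
      linarith [sq_nonneg (a + c * x)]
    have k2 : c ^ 2 * x ^ 2 ≤ c ^ 2 * (1 / 4) := by gcongr
    have k3 : (c * y) ^ 2 ≤ c ^ 2 * Y ^ 2 := by rw [mul_pow]; gcongr
    rw [hNdef]
    linarith [sq_nonneg a, sq_nonneg c, mul_nonneg (sq_nonneg a) (sq_nonneg Y)]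
  refine ⟨⟨by linarith, by linarith⟩, hlow, ?_⟩
  have hPQ2 : P ^ 2 + Q ^ 2 ≤ 2 * (Y ^ 2 + 2) := by
    have : (x ^ 2 + y ^ 2) * (Q ^ 2 + c ^ 2) ≤ (1 / 4 + Y ^ 2) * 2 := by
      gcongr
    linarith [sq_nonneg a, sq_nonneg c]
  have ht2 : t ^ 2 * N ≤ 2 * (Y ^ 2 + 2) := by
    have : (t * N) ^ 2 ≤ N * (P ^ 2 + Q ^ 2) := by
      rw [ht, hNdef]; linarith [sq_nonneg (a * Q - c * P)]
    have h4 : N * (t ^ 2 * N) ≤ N * (2 * (Y ^ 2 + 2)) := by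
      calc N * (t ^ 2 * N) = (t * N) ^ 2 := by ring
        _ ≤ N * (P ^ 2 + Q ^ 2) := this
        _ ≤ _ := by gcongr
    exact le_of_mul_le_mul_left h4 hN
  have hfin : t ^ 2 ≤ (2 * (2 + Y ^ 2)) ^ 2 := by
    calc t ^ 2 = t ^ 2 * 1 := by ring
      _ ≤ t ^ 2 * (2 * (2 + Y ^ 2) * N) := by gcongr
      _ = (t ^ 2 * N) * (2 * (2 + Y ^ 2)) := by ring
      _ ≤ (2 * (Y ^ 2 + 2)) * (2 * (2 + Y ^ 2)) := by gcongr
      _ = _ := by ring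
  exact abs_le_of_sq_le_sq hfin (by positivity)

lemma mob_bounds {v : ℝ × ℝ} (hv : v ≠ 0) {t Y : ℝ} (hY : 1 ≤ Y)
    (h1 : |(mob v t).re| ≤ 1 / 2) (h2 : 1 / 2 ≤ (mob v t).im) (h3 : (mob v t).im ≤ Y) :
    (|v.1| ≤ Y + 2 ∧ |v.2| ≤ Y + 2) ∧ 1 ≤ 2 * (2 + Y ^ 2) * (v.1 ^ 2 + v.2 ^ 2) ∧
      |t| ≤ 2 * (2 + Y ^ 2) := by
  have hN := normSq_pos_of_ne hv
  have hD := mob_den_pos hv t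
  obtain ⟨r1, r2, r3⟩ := cdiv_formulas (v.1 * t - v.2 / (v.1 ^ 2 + v.2 ^ 2))
    (v.2 * t + v.1 / (v.1 ^ 2 + v.2 ^ 2)) v.1 v.2 hD.ne'
  rw [← mob_form] at r1 r2 r3
  have hw := mob_im hv t
  have hns : normSq (mob v t) = (mob v t).re ^ 2 + (mob v t).im ^ 2 := by rw [normSq_apply]; ring
  rw [hns] at r3
  generalize (mob v t).re = x at *
  generalize (mob v t).im = y at *
  obtain ⟨a, c⟩ := v
  simp only at *
  generalize hNdef : a ^ 2 + c ^ 2 = N at *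
  generalize hQ : c * t + a / N = Q at *
  generalize hP : a * t - c / N = P at *
  have hPQ : a * Q - P * c = 1 := by
    rw [← hQ, ← hP]; field_simp; rw [← hNdef]; ring
  have hyD : y * (Q ^ 2 + c ^ 2) = 1 := by rw [hw]; field_simp
  have hxD : x * (Q ^ 2 + c ^ 2) = P * Q + a * c := by rw [r1]; field_simp
  have e1 : a - c * x = Q * y := by
    have : (a - c * x) * (Q ^ 2 + c ^ 2) = Q * y * (Q ^ 2 + c ^ 2) := by
      rw [mul_assoc Q, hyD]
      linear_combination (-c) * hxD + Q * hPQ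
    exact mul_right_cancel₀ hD.ne' this
  have ht : t * N = a * P + c * Q := by
    rw [← hP, ← hQ]; field_simp; rw [← hNdef]; ring
  have hP2 : P ^ 2 + a ^ 2 = (x ^ 2 + y ^ 2) * (Q ^ 2 + c ^ 2) := by
    rw [r3]; field_simp
  exact mob_bounds_aux hY h1 h2 h3 hNdef.symm hN hyD e1 ht hP2

structure NicePhi (φ : ℂ → ℝ) (B Y : ℝ) : Prop where
  meas : Measurable φ
  nonneg : ∀ z, 0 ≤ φ z
  le : ∀ z, φ z ≤ B
  oneY : 1 ≤ Y
  supp : ∀ z, φ z ≠ 0 → |z.re| ≤ 1 / 2 ∧ 1 / 2 ≤ z.im ∧ z.im ≤ Y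
  cont : ∀ z : ℂ, 0 < z.im → GoodPt z → ContinuousAt φ z

noncomputable def horoInt (φ : ℂ → ℝ) (v : ℝ × ℝ) : ℝ := ∫ t : ℝ, φ (mob v t)

lemma measurable_mob : Measurable (fun p : (ℝ × ℝ) × ℝ => mob p.1 p.2) := by
  unfold mob
  fun_prop

section B
variable {φ : ℂ → ℝ} {B Y : ℝ}

lemma NicePhi.B_nonneg (hφ : NicePhi φ B Y) : 0 ≤ B := (hφ.nonneg 0).trans (hφ.le 0)

lemma NicePhi.zero (hφ : NicePhi φ B Y) : φ 0 = 0 := by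
  by_contra h
  have := (hφ.supp 0 h).2.1
  norm_num at this

lemma NicePhi.ne_zero (hφ : NicePhi φ B Y) {v : ℝ × ℝ} {t : ℝ} (h : φ (mob v t) ≠ 0) : v ≠ 0 := by
  rintro rfl
  rw [mob_zero] at h
  exact h hφ.zero

lemma NicePhi.dom (hφ : NicePhi φ B Y) (v : ℝ × ℝ) (t : ℝ) : ‖φ (mob v t)‖ ≤
    (Set.Icc (-(2 * (2 + Y ^ 2))) (2 * (2 + Y ^ 2))).indicator (fun _ => B) t := by
  by_cases h : φ (mob v t) = 0
  · rw [h, norm_zero]; exact Set.indicator_nonneg (fun _ _ => hφ.B_nonneg) _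
  · have hb := hφ.supp _ h
    have := (mob_bounds (hφ.ne_zero h) hφ.oneY hb.1 hb.2.1 hb.2.2).2.2
    rw [Set.indicator_of_mem (Set.mem_Icc.2 (abs_le.1 this)), Real.norm_eq_abs, abs_of_nonneg (hφ.nonneg _)]
    exact hφ.le _

lemma dom_integrable : Integrable
    ((Set.Icc (-(2 * (2 + Y ^ 2))) (2 * (2 + Y ^ 2))).indicator (fun _ : ℝ => B)) := by
  rw [integrable_indicator_iff measurableSet_Icc]
  exact integrableOn_const isCompact_Icc.measure_lt_top.ne

lemma NicePhi.meas_mob (hφ : NicePhi φ B Y) (v : ℝ × ℝ) : Measurable fun t => φ (mob v t) := by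
  have : Measurable fun t => mob v t := by unfold mob; fun_prop
  exact hφ.meas.comp this

lemma NicePhi.integrable (hφ : NicePhi φ B Y) (v : ℝ × ℝ) : Integrable fun t => φ (mob v t) :=
  dom_integrable.mono' (hφ.meas_mob v).aestronglyMeasurable
    (Filter.Eventually.of_forall (hφ.dom v))

lemma horoInt_nonneg (hφ : NicePhi φ B Y) (v : ℝ × ℝ) : 0 ≤ horoInt φ v :=
  integral_nonneg fun _ => hφ.nonneg _

lemma horoInt_lintegral (hφ : NicePhi φ B Y) (v : ℝ × ℝ) :
    ENNReal.ofReal (horoInt φ v) = ∫⁻ t, ENNReal.ofReal (φ (mob v t)) :=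
  ofReal_integral_eq_lintegral_ofReal (hφ.integrable v)
    (Filter.Eventually.of_forall fun _ => hφ.nonneg _)

lemma horoInt_bdd (hφ : NicePhi φ B Y) : ∃ C, 0 ≤ C ∧ ∀ v, |horoInt φ v| ≤ C := by
  refine ⟨∫ t, (Set.Icc (-(2 * (2 + Y ^ 2))) (2 * (2 + Y ^ 2))).indicator (fun _ : ℝ => B) t,
    integral_nonneg fun x => Set.indicator_nonneg (fun _ _ => hφ.B_nonneg) _, fun v => ?_⟩
  exact norm_integral_le_of_norm_le dom_integrable (Filter.Eventually.of_forall (hφ.dom v))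

lemma horoInt_exists {v : ℝ × ℝ} (h : horoInt φ v ≠ 0) :
    ∃ t, φ (mob v t) ≠ 0 := by
  by_contra! h0
  apply h
  simp [horoInt, h0]

lemma horoInt_supp (hφ : NicePhi φ B Y) (v : ℝ × ℝ) (h : horoInt φ v ≠ 0) :
    |v.1| ≤ Y + 2 ∧ |v.2| ≤ Y + 2 := by
  obtain ⟨t, ht⟩ := horoInt_exists h
  have hb := hφ.supp _ ht
  exact (mob_bounds (hφ.ne_zero ht) hφ.oneY hb.1 hb.2.1 hb.2.2).1

lemma horoInt_zero (hφ : NicePhi φ B Y) : horoInt φ 0 = 0 := by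
  simp [horoInt, mob_zero, hφ.zero]

lemma mob_continuousAt {v : ℝ × ℝ} (hv : v ≠ 0) (t : ℝ) : ContinuousAt (fun v => mob v t) v := by
  have hN := (normSq_pos_of_ne hv).ne'
  unfold mob
  refine ContinuousAt.div ?_ ?_ ?_
  · refine ContinuousAt.sub (by fun_prop) (Complex.continuous_ofReal.continuousAt.comp ?_)
    exact ContinuousAt.div (by fun_prop) (by fun_prop) hN
  · refine ContinuousAt.add (by fun_prop) (Complex.continuous_ofReal.continuousAt.comp ?_)
    exact ContinuousAt.div (by fun_prop) (by fun_prop) hN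
  · intro h
    have h1 := congrArg Complex.re h
    have h2 := congrArg Complex.im h
    simp only [Complex.add_re, Complex.mul_re, Complex.ofReal_re, Complex.ofReal_im,
      Complex.I_re, Complex.I_im, Complex.add_im, Complex.mul_im, Complex.zero_re,
      Complex.zero_im] at h1 h2
    have := mob_den_pos hv t
    have h2' : v.2 = 0 := by linarith
    have h1' : v.2 * t + v.1 / (v.1 ^ 2 + v.2 ^ 2) = 0 := by linarith
    rw [h1', h2'] at this
    norm_num at this

lemma horoInt_continuous (hφ : NicePhi φ B Y) : Continuous (horoInt φ) := by
  rw [continuous_iff_continuousAt]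
  intro v
  rcases eq_or_ne v 0 with rfl | hv
  · have : horoInt φ =ᶠ[nhds 0] fun _ => 0 := by
      have hc : Continuous fun v : ℝ × ℝ => 2 * (2 + Y ^ 2) * (v.1 ^ 2 + v.2 ^ 2) := by fun_prop
      have hlt : ∀ᶠ v in nhds (0 : ℝ × ℝ), 2 * (2 + Y ^ 2) * (v.1 ^ 2 + v.2 ^ 2) < 1 := by
        refine hc.continuousAt.eventually_lt continuousAt_const ?_
        norm_num
      filter_upwards [hlt] with v hv
      by_contra h
      obtain ⟨t, ht⟩ := horoInt_exists h
      have hb := hφ.supp _ ht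
      have := (mob_bounds (hφ.ne_zero ht) hφ.oneY hb.1 hb.2.1 hb.2.2).2.1
      linarith
    exact continuousAt_const.congr this.symm
  · refine continuousAt_of_dominated (bound := (Set.Icc (-(2 * (2 + Y ^ 2)))
      (2 * (2 + Y ^ 2))).indicator (fun _ => B)) ?_ ?_ dom_integrable ?_
    · exact Filter.Eventually.of_forall fun w => (hφ.meas_mob w).aestronglyMeasurable
    · exact Filter.Eventually.of_forall fun w => Filter.Eventually.of_forall (hφ.dom w)
    · filter_upwards [mob_good hv] with t ht
      exact ContinuousAt.comp (f := fun v => mob v t) (g := φ)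
        (hφ.cont _ (mob_im_pos hv t) ht) (mob_continuousAt hv t)

lemma horoInt_primSum (hφ : NicePhi φ B Y) :
    Filter.Tendsto (primSum (horoInt φ)) (nhdsWithin 0 (Set.Ioi 0))
      (nhds (6 / Real.pi ^ 2 * ∫ x, horoInt φ x)) := by
  obtain ⟨C, hC0, hC⟩ := horoInt_bdd hφ
  exact primSum_tendsto (R := Y + 2) (by linarith [hφ.oneY]) (horoInt_continuous hφ)
    (horoInt_zero hφ) hC0 hC (horoInt_supp hφ)

end B

lemma lint_affine {F : ℝ → ENNReal} (hF : Measurable F) {c : ℝ} (hc : c ≠ 0) (s : ℝ) :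
    ∫⁻ x, F (x / c + s) = ENNReal.ofReal |c| * ∫⁻ x, F x := by
  have h1 : ∫⁻ x, F (c⁻¹ * x + s) = ∫⁻ y, F (y + s) ∂(Measure.map (c⁻¹ * ·) volume) := by
    rw [lintegral_map (by fun_prop) (by fun_prop)]
  rw [Real.map_volume_mul_left (inv_ne_zero hc), lintegral_smul_measure,
    lintegral_add_right_eq_self F s, inv_inv] at h1
  simp_rw [div_eq_inv_mul]
  exact h1

lemma horo_chart {ψ : ℂ → ENNReal} (a : ℝ) {c : ℝ} (hc : c ≠ 0) :
    ∫⁻ t, ψ (mob (a, c) t) =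
      ∫⁻ t : ℝ, ψ (((a / c + -(t / (c ^ 2 * (1 + t ^ 2))) : ℝ) : ℂ) +
        ((1 / (c ^ 2 * (1 + t ^ 2)) : ℝ) : ℂ) * I) := by
  have hdet : a * 0 - (-1 / c) * c = 1 := by field_simp; ring
  rw [← lintegral_add_right_eq_self _ ((a * (-1 / c) + c * 0) / (a ^ 2 + c ^ 2))]
  refine lintegral_congr fun t => ?_
  rw [← mob_shift hdet]
  congr 1
  have hc' : (c : ℂ) ≠ 0 := by exact_mod_cast hc
  have h2 : (1 + t ^ 2 : ℂ) = (t + I) * (t - I) := by ring_nf; simp; ring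
  have hr : (1 + t ^ 2 : ℝ) ≠ 0 := by positivity
  have hr' : (1 + t ^ 2 : ℂ) ≠ 0 := by exact_mod_cast hr
  have h3 : (t + I : ℂ) ≠ 0 := by intro h; rw [h2, h] at hr'; simp at hr'
  have h4 : (t - I : ℂ) ≠ 0 := by intro h; rw [h2, h] at hr'; simp at hr'
  push_cast
  rw [h2]
  field_simp
  ring_nf
  try simp
  try ring

lemma lint_scale {M : ℝ → ENNReal} (k : ℝ) (hk : 0 < k) :
    ∫⁻ v in Set.Ioi (0 : ℝ), ENNReal.ofReal v * M (1 / (v ^ 2 * k)) =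
      ENNReal.ofReal (1 / (2 * k)) * ∫⁻ y in Set.Ioi (0 : ℝ), M y * ENNReal.ofReal (1 / y ^ 2) := by
  have hd : ∀ x ∈ Set.Ioi (0 : ℝ), HasDerivWithinAt (fun v : ℝ => 1 / (v ^ 2 * k))
      (-(2 / (k * x ^ 3))) (Set.Ioi 0) x := by
    intro x hx
    have hx' : x ≠ 0 := ne_of_gt hx
    have h1 : HasDerivAt (fun v : ℝ => v ^ 2 * k) (2 * x * k) x := by
      simpa using (hasDerivAt_pow 2 x).mul_const k
    have h2 := h1.inv (by positivity)
    simp only [one_div]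
    refine (h2.congr_deriv ?_).hasDerivWithinAt
    field_simp
  have hinj : Set.InjOn (fun v : ℝ => 1 / (v ^ 2 * k)) (Set.Ioi 0) := by
    intro x hx y hy hxy
    have hx' : 0 < x := hx
    have hy' : 0 < y := hy
    have : x ^ 2 = y ^ 2 := by
      simp only at hxy
      field_simp at hxy
      linarith
    nlinarith
  have him : (fun v : ℝ => 1 / (v ^ 2 * k)) '' Set.Ioi 0 = Set.Ioi 0 := by
    ext y
    constructor
    · rintro ⟨v, hv, rfl⟩
      have : 0 < v := hv
      show 0 < 1 / (v ^ 2 * k)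
      positivity
    · intro hy
      have hy' : 0 < y := hy
      refine ⟨Real.sqrt (1 / (y * k)), Real.sqrt_pos.2 (by positivity), ?_⟩
      simp only
      rw [Real.sq_sqrt (by positivity)]
      field_simp
  have key := lintegral_image_eq_lintegral_abs_deriv_mul measurableSet_Ioi hd hinj
    (fun y => M y * ENNReal.ofReal (1 / y ^ 2))
  rw [him] at key
  rw [key, ← lintegral_const_mul' _ _ ENNReal.ofReal_ne_top]
  refine setLIntegral_congr_fun measurableSet_Ioi fun v hv => ?_
  have hv' : 0 < v := hv
  try simp only
  have e : ENNReal.ofReal v = ENNReal.ofReal (1 / (2 * k)) * (ENNReal.ofReal |-(2 / (k * v ^ 3))| *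
      ENNReal.ofReal (1 / (1 / (v ^ 2 * k)) ^ 2)) := by
    rw [← ENNReal.ofReal_mul (by positivity), ← ENNReal.ofReal_mul (by positivity), abs_neg,
      abs_of_pos (by positivity)]
    congr 1; field_simp
  rw [e]; ring

lemma lint_scale' {M : ℝ → ENNReal} (k : ℝ) (hk : 0 < k) :
    ∫⁻ v : ℝ, ENNReal.ofReal |v| * M (1 / (v ^ 2 * k)) =
      ENNReal.ofReal (1 / k) * ∫⁻ y in Set.Ioi (0 : ℝ), M y * ENNReal.ofReal (1 / y ^ 2) := by
  have hneg : ∫⁻ v in Set.Iio (0 : ℝ), ENNReal.ofReal |v| * M (1 / (v ^ 2 * k)) =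
      ∫⁻ v in Set.Ioi (0 : ℝ), ENNReal.ofReal |v| * M (1 / (v ^ 2 * k)) := by
    rw [← lintegral_indicator measurableSet_Iio, ← lintegral_indicator measurableSet_Ioi,
      ← lintegral_neg_eq_self]
    refine lintegral_congr fun v => ?_
    by_cases h : 0 < v
    · rw [Set.indicator_of_mem (by simpa using h), Set.indicator_of_mem (by simpa using h)]
      simp
    · rw [Set.indicator_of_notMem (by simpa using h), Set.indicator_of_notMem (by simpa using h)]
  have hpos : ∫⁻ v in Set.Ioi (0 : ℝ), ENNReal.ofReal |v| * M (1 / (v ^ 2 * k)) =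
      ∫⁻ v in Set.Ioi (0 : ℝ), ENNReal.ofReal v * M (1 / (v ^ 2 * k)) := by
    refine setLIntegral_congr_fun measurableSet_Ioi fun v hv => ?_
    rw [abs_of_pos hv]
  rw [← lintegral_add_compl _ (measurableSet_Ioi (a := (0:ℝ))), Set.compl_Ioi,
    setLIntegral_congr (Iio_ae_eq_Iic (a := (0:ℝ))).symm, hneg, hpos, lint_scale k hk, ← add_mul,
    ← ENNReal.ofReal_add (by positivity) (by positivity)]
  congr 2; field_simp; norm_num

theorem lint_horo {ψ : ℂ → ENNReal} (hψ : Measurable ψ) :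
    ∫⁻ v : ℝ × ℝ, ∫⁻ t, ψ (mob v t) = ENNReal.ofReal Real.pi *
      ∫⁻ y in Set.Ioi (0 : ℝ), (∫⁻ x : ℝ, ψ ((x : ℂ) + y * I)) * ENNReal.ofReal (1 / y ^ 2) := by
  set M : ℝ → ENNReal := fun y => ∫⁻ x : ℝ, ψ ((x : ℂ) + y * I) with hM
  have hMm : Measurable M := by
    apply Measurable.lintegral_prod_right' (f := fun p : ℝ × ℝ => ψ ((p.2 : ℂ) + p.1 * I))
    exact hψ.comp (by fun_prop)
  have hmm : Measurable (fun v : ℝ × ℝ => ∫⁻ t, ψ (mob v t)) :=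
    Measurable.lintegral_prod_right' (f := fun p : (ℝ × ℝ) × ℝ => ψ (mob p.1 p.2))
      (hψ.comp measurable_mob)
  rw [Measure.volume_eq_prod, lintegral_prod_symm _ hmm.aemeasurable]
  have hne : ∀ᵐ c : ℝ, c ≠ 0 := by simp [ae_iff]
  have s1 : ∀ᵐ c : ℝ, ∫⁻ a : ℝ, ∫⁻ t, ψ (mob (a, c) t) =
      ∫⁻ t : ℝ, ENNReal.ofReal |c| * M (1 / (c ^ 2 * (1 + t ^ 2))) := by
    filter_upwards [hne] with c hc
    simp_rw [horo_chart _ hc]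
    rw [lintegral_lintegral_swap]
    · refine lintegral_congr fun t => ?_
      exact lint_affine (F := fun x : ℝ => ψ ((x : ℂ) +
        ((1 / (c ^ 2 * (1 + t ^ 2)) : ℝ) : ℂ) * I)) (hψ.comp (by fun_prop)) hc _
    · exact (hψ.comp (by fun_prop : Measurable fun p : ℝ × ℝ =>
        (((p.1 / c + -(p.2 / (c ^ 2 * (1 + p.2 ^ 2))) : ℝ) : ℂ) +
          ((1 / (c ^ 2 * (1 + p.2 ^ 2)) : ℝ) : ℂ) * I))).aemeasurable
  rw [lintegral_congr_ae s1, lintegral_lintegral_swap]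
  · have : ∀ t : ℝ, ∫⁻ c : ℝ, ENNReal.ofReal |c| * M (1 / (c ^ 2 * (1 + t ^ 2))) =
        ENNReal.ofReal ((1 + t ^ 2)⁻¹) * ∫⁻ y in Set.Ioi (0 : ℝ), M y * ENNReal.ofReal (1 / y ^ 2) := by
      intro t
      rw [lint_scale' _ (by positivity), one_div]
    simp_rw [this]
    rw [lintegral_mul_const _ (by fun_prop), ← ofReal_integral_eq_lintegral_ofReal,
      integral_univ_inv_one_add_sq]
    · exact integrable_inv_one_add_sq
    · exact Filter.Eventually.of_forall fun t => by positivity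
  · refine Measurable.aemeasurable ?_
    exact (by fun_prop : Measurable fun p : ℝ × ℝ => ENNReal.ofReal |p.1|).mul
      (hMm.comp (by fun_prop))

open Matrix Matrix.SpecialLinearGroup in
noncomputable def act (γ : Matrix.SpecialLinearGroup (Fin 2) ℤ) (z : ℂ) : ℂ :=
  ((γ.1 0 0 : ℤ) * z + (γ.1 0 1 : ℤ)) / ((γ.1 1 0 : ℤ) * z + (γ.1 1 1 : ℤ))

lemma act_eq (γ : Matrix.SpecialLinearGroup (Fin 2) ℤ) (z : UpperHalfPlane) :
    ((γ • z : UpperHalfPlane) : ℂ) = act γ z := by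
  rw [UpperHalfPlane.specialLinearGroup_apply]
  simp [act]

lemma det_eq (γ : Matrix.SpecialLinearGroup (Fin 2) ℤ) :
    γ.1 0 0 * γ.1 1 1 - γ.1 0 1 * γ.1 1 0 = 1 := by
  have := γ.2
  rwa [Matrix.det_fin_two] at this

lemma act_mob (γ : Matrix.SpecialLinearGroup (Fin 2) ℤ) {ε : ℝ} (hε : 0 < ε) :
    ∃ s : ℝ, ∀ x : ℝ, act γ ((x : ℂ) + ε * I) =
      mob (latPt (Real.sqrt ε) (γ.1 0 0, γ.1 1 0)) (x / ε + s) := by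
  have hs := Real.sqrt_pos.2 hε
  have hq := Real.mul_self_sqrt hε.le
  set r := Real.sqrt ε with hr
  have hdet : (r * (γ.1 0 0 : ℤ)) * ((γ.1 1 1 : ℤ) / r) - ((γ.1 0 1 : ℤ) / r) * (r * (γ.1 1 0 : ℤ)) = (1 : ℝ) := by
    have h : ((γ.1 0 0 : ℤ) : ℝ) * (γ.1 1 1 : ℤ) - (γ.1 0 1 : ℤ) * (γ.1 1 0 : ℤ) = 1 := by
      exact_mod_cast det_eq γ
    field_simp
    linarith
  refine ⟨((r * (γ.1 0 0 : ℤ)) * ((γ.1 0 1 : ℤ) / r) + (r * (γ.1 1 0 : ℤ)) * ((γ.1 1 1 : ℤ) / r)) /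
    ((r * (γ.1 0 0 : ℤ)) ^ 2 + (r * (γ.1 1 0 : ℤ)) ^ 2), fun x => ?_⟩
  · unfold latPt
    simp only
    rw [← mob_shift hdet]
    have hr0 : (r : ℂ) ≠ 0 := by exact_mod_cast hs.ne'
    have hq' : (ε : ℂ) = r * r := by exact_mod_cast hq.symm
    unfold act
    rw [← mul_div_mul_left _ _ (inv_ne_zero hr0)]
    push_cast
    rw [hq']
    congr 1 <;> field_simp

instance : Countable (Matrix.SpecialLinearGroup (Fin 2) ℤ) :=
  have : Countable (Matrix (Fin 2) (Fin 2) ℤ) := inferInstanceAs (Countable (Fin 2 → Fin 2 → ℤ))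
  Subtype.val_injective.countable (f := fun γ : Matrix.SpecialLinearGroup (Fin 2) ℤ => γ.1)

lemma col_ne_zero (γ : Matrix.SpecialLinearGroup (Fin 2) ℤ) {h : ℝ} (hh : 0 < h) :
    latPt h (γ.1 0 0, γ.1 1 0) ≠ 0 := by
  intro h0
  simp only [latPt, Prod.mk_eq_zero, mul_eq_zero, hh.ne', false_or, Int.cast_eq_zero] at h0
  have := det_eq γ
  rw [h0.1, h0.2] at this
  norm_num at this

lemma ae_affine {P : ℝ → Prop} (h : ∀ᵐ t : ℝ, P t) {c : ℝ} (hc : c ≠ 0) (s : ℝ) :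
    ∀ᵐ x : ℝ, P (x / c + s) := by
  have q1 : Measure.QuasiMeasurePreserving (fun x : ℝ => c⁻¹ * x) volume volume := by
    refine ⟨by fun_prop, ?_⟩
    rw [Real.map_volume_mul_left (inv_ne_zero hc)]
    exact Measure.smul_absolutelyContinuous
  have q2 := (measurePreserving_add_right (volume : Measure ℝ) s).quasiMeasurePreserving
  have := (q2.comp q1).ae h
  filter_upwards [this] with x hx
  rw [div_eq_inv_mul]
  exact hx

lemma ae_good {ε : ℝ} (hε : 0 < ε) : ∀ᵐ x : ℝ, ∀ γ : Matrix.SpecialLinearGroup (Fin 2) ℤ,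
    GoodPt (act γ ((x : ℂ) + ε * I)) := by
  rw [ae_all_iff]
  intro γ
  obtain ⟨s, hs⟩ := act_mob γ hε
  simp_rw [hs]
  exact ae_affine (mob_good (col_ne_zero γ (Real.sqrt_pos.2 hε))) hε.ne' s

/-- coset representatives -/
noncomputable def cosetRep (q : {p : ℤ × ℤ // IsCoprime p.1 p.2} × ℤ) :
    Matrix.SpecialLinearGroup (Fin 2) ℤ :=
  ⟨!![q.1.1.1, q.1.1.1 * q.2 - q.1.2.choose_spec.choose;
     q.1.1.2, q.1.1.2 * q.2 + q.1.2.choose], by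
    have := q.1.2.choose_spec.choose_spec
    rw [Matrix.det_fin_two_of]
    linear_combination this⟩

lemma cosetRep_bij : Function.Bijective cosetRep := by
  constructor
  · rintro ⟨⟨p, hp⟩, n⟩ ⟨⟨p', hp'⟩, n'⟩ h
    have h' := congrArg Subtype.val h
    have h00 := congrFun (congrFun h' 0) 0
    have h10 := congrFun (congrFun h' 1) 0
    simp only [cosetRep, Matrix.of_apply, Matrix.cons_val', Matrix.cons_val_zero,
      Matrix.cons_val_one] at h00 h10
    have hpp : p = p' := Prod.ext h00 h10
    subst hpp
    have h01 := congrFun (congrFun h' 0) 1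
    have h11 := congrFun (congrFun h' 1) 1
    simp [cosetRep] at h01 h11
    have : n = n' := by
      rcases h01 with h | h
      · exact h
      · rcases h11 with h2 | h2
        · exact h2
        · rw [h, h2] at hp; exact absurd hp not_isCoprime_zero_zero
    rw [this]
  · intro γ
    have hdet := det_eq γ
    have hcop : IsCoprime (γ.1 0 0) (γ.1 1 0) := ⟨γ.1 1 1, -γ.1 0 1, by linarith⟩
    have hb := hcop.choose_spec.choose_spec
    set u := hcop.choose with hu
    set w := hcop.choose_spec.choose with hw
    refine ⟨(⟨(γ.1 0 0, γ.1 1 0), hcop⟩, γ.1 0 1 * u + w * γ.1 1 1), ?_⟩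
    apply Subtype.ext
    ext i j
    fin_cases i <;> fin_cases j
    · rfl
    · show γ.1 0 0 * (γ.1 0 1 * u + w * γ.1 1 1) - w = γ.1 0 1
      linear_combination γ.1 0 1 * hb + w * hdet
    · rfl
    · show γ.1 1 0 * (γ.1 0 1 * u + w * γ.1 1 1) + u = γ.1 1 1
      linear_combination γ.1 1 1 * hb - u * hdet

lemma cosetRep_act (p : {p : ℤ × ℤ // IsCoprime p.1 p.2}) (n : ℤ) (z : ℂ) :
    act (cosetRep (p, n)) z = act (cosetRep (p, 0)) (z + n) := by
  simp only [act, cosetRep, Matrix.of_apply, Matrix.cons_val', Matrix.cons_val_zero,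
      Matrix.cons_val_one]
  simp
  congr 1 <;> ring

lemma lint_unfold (G : ℝ → ENNReal) :
    ∑' n : ℤ, ∫⁻ x in Set.Ioc (0 : ℝ) 1, G (x + n) = ∫⁻ x, G x := by
  rw [← setLIntegral_univ, ← iUnion_Ioc_intCast, lintegral_iUnion (fun _ => measurableSet_Ioc)
    (Set.pairwise_disjoint_Ioc_intCast ℝ)]
  congr 1; ext n
  rw [← lintegral_indicator measurableSet_Ioc, ← lintegral_indicator measurableSet_Ioc,
    ← lintegral_add_right_eq_self ((Set.Ioc (n : ℝ) (n + 1)).indicator G) (n : ℝ)]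
  refine lintegral_congr fun x => ?_
  by_cases h : x ∈ Set.Ioc (0 : ℝ) 1
  · rw [Set.indicator_of_mem h, Set.indicator_of_mem]
    constructor <;> linarith [h.1, h.2]
  · rw [Set.indicator_of_notMem h, Set.indicator_of_notMem]
    intro h2; apply h
    constructor <;> linarith [h2.1, h2.2]

theorem unfold_sum {φ : ℂ → ℝ} {B Y : ℝ} (hφ : NicePhi φ B Y) {ε : ℝ} (hε : 0 < ε) :
    ∑' γ : Matrix.SpecialLinearGroup (Fin 2) ℤ, ∫⁻ x in Set.Ioc (0 : ℝ) 1,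
      ENNReal.ofReal (φ (act γ ((x : ℂ) + ε * I))) =
    ENNReal.ofReal (primSum (horoInt φ) (Real.sqrt ε)) := by
  classical
  rw [← (Equiv.ofBijective _ cosetRep_bij).tsum_eq, ENNReal.tsum_prod']
  have h1 : ∀ p : {p : ℤ × ℤ // IsCoprime p.1 p.2}, ∑' n : ℤ, ∫⁻ x in Set.Ioc (0 : ℝ) 1,
      ENNReal.ofReal (φ (act (Equiv.ofBijective _ cosetRep_bij (p, n)) ((x : ℂ) + ε * I))) =
      ENNReal.ofReal (ε * horoInt φ (latPt (Real.sqrt ε) p.1)) := by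
    intro p
    obtain ⟨s, hs⟩ := act_mob (cosetRep (p, 0)) hε
    have h2 : ∀ (n : ℤ) (x : ℝ), act (Equiv.ofBijective _ cosetRep_bij (p, n)) ((x : ℂ) + ε * I) =
        mob (latPt (Real.sqrt ε) p.1) ((x + n) / ε + s) := by
      intro n x
      rw [Equiv.ofBijective_apply, cosetRep_act]
      have := hs (x + n)
      push_cast at this
      rw [show (x : ℂ) + ε * I + n = x + n + ε * I by ring, this]
      rfl
    simp_rw [h2]
    rw [lint_unfold (fun x => ENNReal.ofReal (φ (mob (latPt (Real.sqrt ε) p.1) (x / ε + s)))),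
      lint_affine (F := fun t => ENNReal.ofReal (φ (mob (latPt (Real.sqrt ε) p.1) t)))
        (hφ.meas_mob _).ennreal_ofReal hε.ne' s, ← horoInt_lintegral hφ, abs_of_pos hε,
      ENNReal.ofReal_mul hε.le]
  simp_rw [h1]
  rw [primSum, Real.sq_sqrt hε.le, ← tsum_mul_left, ENNReal.ofReal_tsum_of_nonneg]
  · refine (tsum_subtype {p : ℤ × ℤ | IsCoprime p.1 p.2}
      (fun p => ENNReal.ofReal (ε * horoInt φ (latPt (Real.sqrt ε) p)))).trans ?_
    congr 1; ext p
    by_cases hp : IsCoprime p.1 p.2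
    · rw [Set.indicator_of_mem (by exact hp), if_pos hp]
    · rw [Set.indicator_of_notMem (by exact hp), if_neg hp]; simp
  · intro p
    split_ifs
    · exact mul_nonneg hε.le (horoInt_nonneg hφ _)
    · simp
  · refine Summable.mul_left _ (summable_of_hasFiniteSupport ?_)
    refine (H_support_finite (horoInt_supp hφ) (Real.sqrt_pos.2 hε)).subset ?_
    intro p hp
    simp only [Function.mem_support, ne_eq, ite_eq_right_iff, not_forall] at hp
    exact hp.2

/-- The fundamental domain as a subset of the complex plane. -/
def fdSet : Set ℂ := {z | |z.re| < 1 / 2 ∧ 1 < normSq z ∧ 0 < z.im}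

noncomputable def phiOf (f : ℂ → ℝ) : ℂ → ℝ := fdSet.indicator f

lemma fdSet_open : IsOpen fdSet := by
  have h1 : IsOpen {z : ℂ | |z.re| < 1 / 2} := isOpen_lt (by fun_prop) (by fun_prop)
  have h2 : IsOpen {z : ℂ | 1 < normSq z} := isOpen_lt (by fun_prop) continuous_normSq
  have h3 : IsOpen {z : ℂ | 0 < z.im} := isOpen_lt (by fun_prop) (by fun_prop)
  exact h1.inter (h2.inter h3)

lemma fdSet_im {z : ℂ} (hz : z ∈ fdSet) : 1 / 2 < z.im := by
  obtain ⟨h1, h2, h3⟩ := hz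
  rw [normSq_apply] at h2
  rw [abs_lt] at h1
  nlinarith

lemma exists_bound {f : ℂ → ℝ} (hcont : ContinuousOn f {z : ℂ | 0 < z.im}) (Y : ℝ) :
    ∃ B : ℝ, ∀ z : ℂ, |z.re| ≤ 1 / 2 → 1 / 2 ≤ z.im → z.im ≤ Y → |f z| ≤ B := by
  have hK : IsCompact (Set.Icc (-(1/2 : ℝ)) (1/2) ×ℂ Set.Icc (1/2 : ℝ) Y) :=
    isCompact_Icc.reProdIm isCompact_Icc
  obtain ⟨B, hB⟩ := hK.exists_bound_of_continuousOn (f := f) (hcont.mono fun z hz => by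
    have := (mem_reProdIm.1 hz).2.1
    show 0 < z.im
    linarith)
  refine ⟨B, fun z h1 h2 h3 => hB z (mem_reProdIm.2 ⟨abs_le.1 h1, h2, h3⟩)⟩

lemma nice_phi {f : ℂ → ℝ} (hcont : ContinuousOn f {z : ℂ | 0 < z.im}) (hf : ∀ z, 0 ≤ f z)
    {Y : ℝ} (hY : ∀ z : ℂ, 0 < z.im → Y < z.im → f z = 0) :
    ∃ B, NicePhi (phiOf f) B (max 1 Y) := by
  obtain ⟨B, hB⟩ := exists_bound hcont (max 1 Y)
  have hsupp : ∀ z, phiOf f z ≠ 0 → |z.re| ≤ 1 / 2 ∧ 1 / 2 ≤ z.im ∧ z.im ≤ max 1 Y := by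
    intro z hz
    have hm : z ∈ fdSet := Set.mem_of_indicator_ne_zero hz
    refine ⟨hm.1.le, (fdSet_im hm).le, ?_⟩
    by_contra! h
    apply hz
    rw [phiOf, Set.indicator_of_mem hm]
    exact hY z hm.2.2 ((le_max_right _ _).trans_lt h)
  have hnn : ∀ z, 0 ≤ phiOf f z := fun z => Set.indicator_nonneg (fun z _ => hf z) z
  refine ⟨max B 0, ⟨?_, hnn, ?_, le_max_left _ _, hsupp, ?_⟩⟩
  · classical
    have h := ContinuousOn.measurable_piecewise (f := f) (g := fun _ => 0) (s := fdSet)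
      (hcont.mono fun z hz => hz.2.2) continuousOn_const fdSet_open.measurableSet
    convert h using 1
    funext z
    by_cases hz : z ∈ fdSet
    · simp [phiOf, hz]
    · simp [phiOf, hz]
  · intro z
    by_cases hz : phiOf f z = 0
    · rw [hz]; exact le_max_right _ _
    · obtain ⟨h1, h2, h3⟩ := hsupp z hz
      have hm : z ∈ fdSet := Set.mem_of_indicator_ne_zero hz
      rw [phiOf, Set.indicator_of_mem hm]
      exact (le_abs_self _).trans ((hB z h1 h2 h3).trans (le_max_left _ _))
  · intro z hz hg
    by_cases hm : z ∈ fdSet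
    · have h1 : ContinuousAt f z := hcont.continuousAt
        ((isOpen_lt (by fun_prop) (by fun_prop)).mem_nhds hz)
      refine h1.congr ?_
      filter_upwards [fdSet_open.mem_nhds hm] with w hw
      rw [phiOf, Set.indicator_of_mem hw]
    · have h0 : ∀ᶠ w in nhds z, phiOf f w = 0 := by
        by_cases h1 : 1 / 2 < |z.re|
        · have : IsOpen {z : ℂ | 1 / 2 < |z.re|} := isOpen_lt (by fun_prop) (by fun_prop)
          filter_upwards [this.mem_nhds h1] with w hw
          refine Set.indicator_of_notMem (fun h => ?_) _
          exact lt_asymm h.1 hw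
        · have h2 : normSq z < 1 := by
            by_contra! h3
            exact hm ⟨lt_of_le_of_ne (not_lt.1 h1) hg.1, lt_of_le_of_ne h3 hg.2.symm, hz⟩
          have : IsOpen {z : ℂ | normSq z < 1} := isOpen_lt continuous_normSq (by fun_prop)
          filter_upwards [this.mem_nhds h2] with w hw
          refine Set.indicator_of_notMem (fun h => ?_) _
          exact lt_asymm h.2.1 hw
      have : phiOf f =ᶠ[nhds z] fun _ => 0 := h0
      exact (continuousAt_const).congr this.symm

lemma neg_ne (g : Matrix.SpecialLinearGroup (Fin 2) ℤ) : g ≠ -g := by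
  intro h
  have h00 : g.1 0 0 = -g.1 0 0 := congrFun (congrFun (congrArg Subtype.val h) 0) 0
  have h10 : g.1 1 0 = -g.1 1 0 := congrFun (congrFun (congrArg Subtype.val h) 1) 0
  have := det_eq g
  rw [show g.1 0 0 = 0 by omega, show g.1 1 0 = 0 by omega] at this
  norm_num at this

lemma sum_act {f : ℂ → ℝ}
    (hinv : ∀ a b c d : ℤ, a * d - b * c = 1 → ∀ z : ℂ, 0 < z.im →
      f (((a : ℂ) * z + b) / ((c : ℂ) * z + d)) = f z) (z : ℂ) (hz : 0 < z.im)
    (hg : ∀ γ, GoodPt (act γ z)) :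
    ∑' γ, ENNReal.ofReal (phiOf f (act γ z)) = 2 * ENNReal.ofReal (f z) := by
  classical
  let τ : UpperHalfPlane := ⟨z, hz⟩
  have hτ : (τ : ℂ) = z := rfl
  have hact : ∀ γ, ((γ • τ : UpperHalfPlane) : ℂ) = act γ z := fun γ => act_eq γ τ
  have hf : ∀ γ, f (act γ z) = f z := fun γ => hinv _ _ _ _ (det_eq γ) z hz
  obtain ⟨g, hgD⟩ := ModularGroup.exists_smul_mem_fd τ
  have hgo : g • τ ∈ ModularGroup.fdo := by
    have hgg := hg g
    rw [← hact] at hgg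
    exact ⟨lt_of_le_of_ne hgD.1 hgg.2.symm, lt_of_le_of_ne hgD.2 hgg.1⟩
  have hmem : ∀ γ, act γ z ∈ fdSet ↔ γ • τ ∈ ModularGroup.fdo := by
    intro γ
    rw [← hact]
    constructor
    · intro h; exact ⟨h.2.1, h.1⟩
    · intro h; exact ⟨h.2, h.1, (γ • τ).2⟩
  have hneg : (-g) • τ = g • τ := by simp
  have hval : ∀ γ, γ • τ ∈ ModularGroup.fdo → phiOf f (act γ z) = f z := by
    intro γ h
    rw [phiOf, Set.indicator_of_mem ((hmem γ).2 h), hf]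
  rw [tsum_eq_sum (s := {g, -g})]
  · rw [Finset.sum_pair (neg_ne g), hval g hgo, hval (-g) (by rw [hneg]; exact hgo), two_mul]
  · intro γ hγ
    rw [phiOf, Set.indicator_of_notMem, ENNReal.ofReal_zero]
    intro h
    rw [hmem] at h
    have h2 : (γ * g⁻¹) • (g • τ) = γ • τ := by rw [smul_smul]; simp
    rcases ModularGroup.eq_one_or_neg_one_of_mem_fdo_mem_fd (g := γ * g⁻¹) hgo
      (by rw [h2]; exact ModularGroup.fdo_subset_fd h) with h3 | h3
    · apply hγ; rw [mul_inv_eq_one] at h3; simp [h3]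
    · apply hγ; rw [mul_inv_eq_iff_eq_mul] at h3; simp [h3]

lemma mem_fundDom (p : ℝ × ℝ) : p ∈ fundDom ↔ ((p.1 : ℂ) + p.2 * I) ∈ fdSet := by
  unfold fundDom fdSet
  simp [normSq_apply, sq]

lemma fundDom_open : IsOpen fundDom := by
  have : fundDom = (fun p : ℝ × ℝ => ((p.1 : ℂ) + p.2 * I)) ⁻¹' fdSet := by
    ext p; exact mem_fundDom p
  rw [this]
  exact fdSet_open.preimage (by fun_prop)

lemma horo_continuous {f : ℂ → ℝ} (hcont : ContinuousOn f {z : ℂ | 0 < z.im}) {ε : ℝ} (hε : 0 < ε) :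
    Continuous fun x : ℝ => f ((x : ℂ) + ε * I) :=
  hcont.comp_continuous (by fun_prop) fun x => by simpa using hε

lemma horo_eq {f : ℂ → ℝ} (hcont : ContinuousOn f {z : ℂ | 0 < z.im}) (hf : ∀ z, 0 ≤ f z)
    (hinv : ∀ a b c d : ℤ, a * d - b * c = 1 → ∀ z : ℂ, 0 < z.im →
      f (((a : ℂ) * z + b) / ((c : ℂ) * z + d)) = f z) {B Y : ℝ} (hφ : NicePhi (phiOf f) B Y)
    {ε : ℝ} (hε : 0 < ε) :
    ∫ x in (0 : ℝ)..1, f ((x : ℂ) + ε * I) = primSum (horoInt (phiOf f)) (Real.sqrt ε) / 2 := by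
  have hm : ∀ γ : Matrix.SpecialLinearGroup (Fin 2) ℤ,
      Measurable fun x : ℝ => ENNReal.ofReal (phiOf f (act γ ((x : ℂ) + ε * I))) := by
    intro γ
    refine (hφ.meas.comp ?_).ennreal_ofReal
    unfold act
    fun_prop
  have key := unfold_sum hφ hε
  rw [← lintegral_tsum (fun γ => (hm γ).aemeasurable)] at key
  have h1 : ∫⁻ x in Set.Ioc (0 : ℝ) 1, ∑' γ : Matrix.SpecialLinearGroup (Fin 2) ℤ,
      ENNReal.ofReal (phiOf f (act γ ((x : ℂ) + ε * I))) =
      ∫⁻ x in Set.Ioc (0 : ℝ) 1, 2 * ENNReal.ofReal (f ((x : ℂ) + ε * I)) := by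
    refine lintegral_congr_ae (ae_restrict_of_ae ?_)
    filter_upwards [ae_good hε] with x hx
    exact sum_act hinv _ (by simpa using hε) hx
  rw [h1, lintegral_const_mul' _ _ (by simp)] at key
  have hnn : 0 ≤ primSum (horoInt (phiOf f)) (Real.sqrt ε) := by
    unfold primSum
    refine mul_nonneg (sq_nonneg _) (tsum_nonneg fun v => ?_)
    split_ifs
    · exact horoInt_nonneg hφ _
    · exact le_rfl
  rw [intervalIntegral.integral_of_le zero_le_one, integral_eq_lintegral_of_nonneg_ae
    (Filter.Eventually.of_forall fun x => hf _) (horo_continuous hcont hε).aestronglyMeasurable]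
  have := congrArg ENNReal.toReal key
  rw [ENNReal.toReal_mul, ENNReal.toReal_ofReal hnn] at this
  simp at this
  linarith

lemma int_horo {f : ℂ → ℝ} (hcont : ContinuousOn f {z : ℂ | 0 < z.im}) (hf : ∀ z, 0 ≤ f z)
    {B Y : ℝ} (hφ : NicePhi (phiOf f) B Y) :
    ∫ v, horoInt (phiOf f) v =
      Real.pi * ∫ p in fundDom, f ((p.1 : ℂ) + p.2 * I) / p.2 ^ 2 := by
  have hmφ := hφ.meas
  have hc2 : ContinuousOn (fun p : ℝ × ℝ => f ((p.1 : ℂ) + p.2 * I) / p.2 ^ 2) fundDom := by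
    refine ContinuousOn.div ?_ (by fun_prop) fun p hp => pow_ne_zero _ hp.2.2.ne'
    exact hcont.comp (by fun_prop) fun p hp => by
      show 0 < ((p.1 : ℂ) + p.2 * I).im
      simpa using hp.2.2
  rw [integral_eq_lintegral_of_nonneg_ae
    (Filter.Eventually.of_forall fun v => horoInt_nonneg hφ v)
    (horoInt_continuous hφ).aestronglyMeasurable,
    integral_eq_lintegral_of_nonneg_ae
    (Filter.Eventually.of_forall fun p => div_nonneg (hf _) (sq_nonneg _))
    (hc2.aestronglyMeasurable fundDom_open.measurableSet)]
  simp_rw [horoInt_lintegral hφ]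
  rw [lint_horo (ψ := fun z => ENNReal.ofReal (phiOf f z)) hmφ.ennreal_ofReal, ENNReal.toReal_mul,
    ENNReal.toReal_ofReal Real.pi_pos.le]
  congr 2
  have e1 : ∫⁻ p in fundDom, ENNReal.ofReal (f ((p.1 : ℂ) + p.2 * I) / p.2 ^ 2) =
      ∫⁻ p : ℝ × ℝ, ENNReal.ofReal (phiOf f ((p.1 : ℂ) + p.2 * I)) * ENNReal.ofReal (1 / p.2 ^ 2) := by
    rw [← lintegral_indicator fundDom_open.measurableSet]
    refine lintegral_congr fun p => ?_
    by_cases hp : p ∈ fundDom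
    · rw [Set.indicator_of_mem hp, phiOf, Set.indicator_of_mem ((mem_fundDom p).1 hp),
        ← ENNReal.ofReal_mul (hf _), mul_one_div]
    · rw [Set.indicator_of_notMem hp, phiOf,
        Set.indicator_of_notMem (fun h => hp ((mem_fundDom p).2 h))]
      simp
  have hmm : Measurable fun p : ℝ × ℝ => ENNReal.ofReal (phiOf f ((p.1 : ℂ) + p.2 * I)) *
      ENNReal.ofReal (1 / p.2 ^ 2) := by
    refine Measurable.mul ?_ (by fun_prop : Measurable fun p : ℝ × ℝ => ENNReal.ofReal (1 / p.2 ^ 2))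
    exact (hmφ.comp (by fun_prop : Measurable fun p : ℝ × ℝ =>
      ((p.1 : ℂ) + p.2 * I))).ennreal_ofReal
  rw [e1, Measure.volume_eq_prod, lintegral_prod_symm _ hmm.aemeasurable,
    ← lintegral_indicator measurableSet_Ioi]
  refine lintegral_congr fun y => ?_
  by_cases hy : 0 < y
  · rw [Set.indicator_of_mem (by exact hy)]
    refine (lintegral_mul_const _ ?_).symm
    exact (hmφ.comp (by fun_prop : Measurable fun x : ℝ => ((x : ℂ) + y * I))).ennreal_ofReal
  · rw [Set.indicator_of_notMem (by exact hy)]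
    have : ∀ x : ℝ, phiOf f ((x : ℂ) + y * I) = 0 := by
      intro x
      refine Set.indicator_of_notMem (fun h => hy ?_) _
      simpa using h.2.2
    simp [this]

theorem equi_nonneg {f : ℂ → ℝ} (hcont : ContinuousOn f {z : ℂ | 0 < z.im}) (hf : ∀ z, 0 ≤ f z)
    (hinv : ∀ a b c d : ℤ, a * d - b * c = 1 → ∀ z : ℂ, 0 < z.im →
      f (((a : ℂ) * z + b) / ((c : ℂ) * z + d)) = f z)
    {Y : ℝ} (hY : ∀ z : ℂ, 0 < z.im → Y < z.im → f z = 0) :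
    Filter.Tendsto (fun ε : ℝ => ∫ x in (0 : ℝ)..1, f ((x : ℂ) + ε * Complex.I))
      (nhdsWithin 0 (Set.Ioi 0))
      (nhds ((3 / Real.pi) * ∫ p in fundDom, f ((p.1 : ℂ) + p.2 * Complex.I) / p.2 ^ 2)) := by
  obtain ⟨B, hφ⟩ := nice_phi hcont hf hY
  have hs : Filter.Tendsto Real.sqrt (nhdsWithin 0 (Set.Ioi 0)) (nhdsWithin 0 (Set.Ioi 0)) := by
    refine tendsto_nhdsWithin_iff.2 ⟨?_, ?_⟩
    · have := Real.continuous_sqrt.tendsto 0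
      rw [Real.sqrt_zero] at this
      exact this.mono_left nhdsWithin_le_nhds
    · filter_upwards [self_mem_nhdsWithin] with x hx
      exact Real.sqrt_pos.2 hx
  have h := ((horoInt_primSum hφ).comp hs).div_const 2
  rw [int_horo hcont hf hφ] at h
  have e : 6 / Real.pi ^ 2 * (Real.pi * ∫ p in fundDom, f ((p.1 : ℂ) + p.2 * Complex.I) / p.2 ^ 2) / 2
      = (3 / Real.pi) * ∫ p in fundDom, f ((p.1 : ℂ) + p.2 * Complex.I) / p.2 ^ 2 := by
    generalize (∫ p in fundDom, f ((p.1 : ℂ) + p.2 * Complex.I) / p.2 ^ 2) = J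
    have := Real.pi_pos
    field_simp
    ring
  rw [e] at h
  refine h.congr' ?_
  filter_upwards [self_mem_nhdsWithin] with ε hε
  exact (horo_eq hcont hf hinv hφ hε).symm

lemma int_fundDom {f : ℂ → ℝ} (hcont : ContinuousOn f {z : ℂ | 0 < z.im})
    {Y : ℝ} (hY : ∀ z : ℂ, 0 < z.im → Y < z.im → f z = 0) :
    IntegrableOn (fun p : ℝ × ℝ => f ((p.1 : ℂ) + p.2 * I) / p.2 ^ 2) fundDom := by
  have hK : IsCompact (Set.Icc (-(1/2 : ℝ)) (1/2) ×ˢ Set.Icc (1/2 : ℝ) Y) :=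
    isCompact_Icc.prod isCompact_Icc
  have hi : IntegrableOn (fun p : ℝ × ℝ => f ((p.1 : ℂ) + p.2 * I) / p.2 ^ 2)
      (Set.Icc (-(1/2 : ℝ)) (1/2) ×ˢ Set.Icc (1/2 : ℝ) Y) := by
    refine ContinuousOn.integrableOn_compact hK ?_
    have hpos : ∀ p ∈ Set.Icc (-(1/2 : ℝ)) (1/2) ×ˢ Set.Icc (1/2 : ℝ) Y, 0 < p.2 := by
      intro p hp
      have := hp.2.1
      linarith
    refine ContinuousOn.div ?_ (by fun_prop) fun p hp => pow_ne_zero _ (hpos p hp).ne'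
    exact hcont.comp (by fun_prop) fun p hp => by
      show 0 < ((p.1 : ℂ) + p.2 * I).im
      simpa using hpos p hp
  refine hi.of_forall_sdiff_eq_zero fundDom_open.measurableSet ?_
  rintro p ⟨hp, hn⟩
  have h2 := fdSet_im ((mem_fundDom p).1 hp)
  simp at h2
  rw [hY _ (by simpa using hp.2.2), zero_div]
  by_contra! h
  simp at h
  exact hn ⟨abs_le.1 hp.1.le, by rw [one_div]; exact h2.le, h⟩


theorem closed_horocycles_equidistribute
    (f : ℂ → ℝ)
    (hcont : ContinuousOn f {z : ℂ | 0 < z.im})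
    (hinv : ∀ a b c d : ℤ, a * d - b * c = 1 → ∀ z : ℂ, 0 < z.im →
      f (((a : ℂ) * z + b) / ((c : ℂ) * z + d)) = f z)
    (hsupp : ∃ Y : ℝ, 0 < Y ∧ ∀ z : ℂ, 0 < z.im →
      (∃ a b c d : ℤ, a * d - b * c = 1 ∧
        Y < ((((a : ℂ) * z + b) / ((c : ℂ) * z + d)).im)) → f z = 0) :
    Filter.Tendsto (fun ε : ℝ => ∫ x in (0 : ℝ)..1, f ((x : ℂ) + ε * Complex.I))
      (nhdsWithin 0 (Set.Ioi 0))
      (nhds ((3 / Real.pi) * ∫ p in fundDom, f ((p.1 : ℂ) + p.2 * Complex.I) / p.2 ^ 2)) := by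
  obtain ⟨Y, -, hY'⟩ := hsupp
  have hY : ∀ z : ℂ, 0 < z.im → Y < z.im → f z = 0 := fun z hz h =>
    hY' z hz ⟨1, 0, 0, 1, by norm_num, by simpa using h⟩
  have hc1 : ContinuousOn (fun z => max (f z) 0) {z : ℂ | 0 < z.im} := hcont.sup continuousOn_const
  have hc2 : ContinuousOn (fun z => max (-f z) 0) {z : ℂ | 0 < z.im} :=
    hcont.neg.sup continuousOn_const
  have hY1 : ∀ z : ℂ, 0 < z.im → Y < z.im → max (f z) 0 = 0 := fun z hz h => by simp [hY z hz h]
  have hY2 : ∀ z : ℂ, 0 < z.im → Y < z.im → max (-f z) 0 = 0 := fun z hz h => by simp [hY z hz h]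
  have h1 := equi_nonneg hc1 (fun z => le_max_right _ _)
    (fun a b c d h z hz => by rw [hinv a b c d h z hz]) hY1
  have h2 := equi_nonneg hc2 (fun z => le_max_right _ _)
    (fun a b c d h z hz => by rw [hinv a b c d h z hz]) hY2
  have hsplit : ∀ r : ℝ, max r 0 - max (-r) 0 = r := by
    intro r
    rcases le_total r 0 with h | h
    · rw [max_eq_right h, max_eq_left (by linarith)]; ring
    · rw [max_eq_left h, max_eq_right (by linarith)]; ring
  have h3 := h1.sub h2
  rw [← mul_sub, ← integral_sub (int_fundDom hc1 hY1) (int_fundDom hc2 hY2)] at h3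
  simp_rw [← sub_div, hsplit] at h3
  refine h3.congr' ?_
  filter_upwards [self_mem_nhdsWithin] with ε hε
  rw [← intervalIntegral.integral_sub ((horo_continuous hc1 hε).intervalIntegrable _ _)
    ((horo_continuous hc2 hε).intervalIntegrable _ _)]
  simp_rw [hsplit]
end
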